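/- Let α ∈ (0,π) and w, L ∈ (0,∞), and let P = P(α,w,L). If u, v : P → ℝ are two translators, each having boundary value −∞ at every point of the horizontal sides of P and boundary value +∞ at every point of the nonhorizontal sides, then u − v is constant on P. -/

import Mathlib

/-!
Write `W_u = √(1 + |∇u|²)` and let `ν_u` be the upward unit normal of the graph of `u`. The
translator equation is `div (∇u / W_u) = 1 / W_u`, and for two translators it gives

  `div ((e^u - e^v) (∇u / W_u - ∇v / W_v)) = (e^u W_u + e^v W_v) (1 - ⟨ν_u, ν_v⟩) ≥ 0`.

If the flux of this field through the boundary of the parallelogram vanishes, then `ν_u = ν_v`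
everywhere, so `∇u = ∇v` and `u - v` is constant. On the sides `e^u - e^v` is not under control, so
`e^t` is replaced by a truncation `E_n`, equal to `e^t - 1` for `|t| ≤ n` and constant for
`|t| ≥ n + 1`. Since `u` and `v` have the same infinite boundary values, `E_n(u) - E_n(v)` vanishes
near every open side. At the corners, where nothing is known about `u` and `v`, the field is
multiplied by a cutoff whose gradient has arbitrarily small `L¹` norm; this is possible because a
rescaled bump of size `r` has gradient `1 / r` on an area `r²`, and the field is bounded for fixed
`n` (`div_flux_ge`, `exists_cutoff`, `le_integral_defect`).

The price of the truncation is the integral of a defect which tends to `0` pointwise as `n → ∞` and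
is dominated by `2 e^u + 2 e^v + 2`, so what remains is the integrability of `e^u`
(`integrableOn_exp`). For this, let `d` be the distance to a slanted side and `s` the coordinate
along it. For small `A > 0` and a suitable `q < 1`, the function `-q log d - A s² / 2` is a strict
supersolution of the translator equation (`no_touching`). The other boundary values of `u` in the
half of the parallelogram next to this side are `-∞`, so comparison gives `e^u ≤ C d^(-q)` there
(`exp_le_dist_rpow`), which is integrable.
-/

open Real Filter MeasureTheory Set

noncomputable section

/-- Partial derivative with respect to the first variable. -/
def pdx (u : ℝ × ℝ → ℝ) (p : ℝ × ℝ) : ℝ := fderiv ℝ u p (1, 0)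

/-- Partial derivative with respect to the second variable. -/
def pdy (u : ℝ × ℝ → ℝ) (p : ℝ × ℝ) : ℝ := fderiv ℝ u p (0, 1)

/-- `u` is a smooth solution of the translator equation
`(1 + u_y²)u_xx − 2u_x u_y u_xy + (1 + u_x²)u_yy = 1 + u_x² + u_y²` on `Ω`. -/
def IsTranslatorOn (Ω : Set (ℝ × ℝ)) (u : ℝ × ℝ → ℝ) : Prop :=
  ContDiffOn ℝ (⊤ : ℕ∞) u Ω ∧
  ∀ p ∈ Ω,
    (1 + (pdy u p) ^ 2) * pdx (pdx u) p
      - 2 * pdx u p * pdy u p * pdy (pdx u) p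
      + (1 + (pdx u p) ^ 2) * pdy (pdy u) p
    = 1 + (pdx u p) ^ 2 + (pdy u p) ^ 2

/-- The open parallelogram `P(α, w, L)`. -/
def Pgram (α w L : ℝ) : Set (ℝ × ℝ) :=
  {p | 0 < p.2 ∧ p.2 < w ∧
       p.2 * Real.cos α / Real.sin α < p.1 ∧
       p.1 < L + p.2 * Real.cos α / Real.sin α}

/-- `u` is a translator on `P(α,w,L)` with boundary value `−∞` at every point of the
horizontal sides and `+∞` at every point of the nonhorizontal sides. -/
def ScherkBVP (α w L : ℝ) (u : ℝ × ℝ → ℝ) : Prop :=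
  IsTranslatorOn (Pgram α w L) u ∧
  (∀ x : ℝ, 0 < x → x < L →
      Tendsto u (nhdsWithin (x, 0) (Pgram α w L)) atBot) ∧
  (∀ x : ℝ, w * Real.cos α / Real.sin α < x → x < L + w * Real.cos α / Real.sin α →
      Tendsto u (nhdsWithin (x, w) (Pgram α w L)) atBot) ∧
  (∀ y : ℝ, 0 < y → y < w →
      Tendsto u (nhdsWithin (y * Real.cos α / Real.sin α, y) (Pgram α w L)) atTop) ∧
  (∀ y : ℝ, 0 < y → y < w →
      Tendsto u (nhdsWithin (L + y * Real.cos α / Real.sin α, y) (Pgram α w L)) atTop)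

/-- The region `Ω(α, w)`: a "parallelogram" whose right-hand side is at infinity. -/
def OmegaReg (α w : ℝ) : Set (ℝ × ℝ) :=
  {p | 0 < p.2 ∧ p.2 < w ∧ p.2 * Real.cos α / Real.sin α < p.1}

/-- `u` is a translator on `Ω(α,w)` with boundary value `−∞` at every point of the two
horizontal edges and `+∞` at every point of the nonhorizontal edge. -/
def ScherkenoidBVP (α w : ℝ) (u : ℝ × ℝ → ℝ) : Prop :=
  IsTranslatorOn (OmegaReg α w) u ∧
  (∀ x : ℝ, 0 < x → Tendsto u (nhdsWithin (x, 0) (OmegaReg α w)) atBot) ∧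
  (∀ x : ℝ, w * Real.cos α / Real.sin α < x →
      Tendsto u (nhdsWithin (x, w) (OmegaReg α w)) atBot) ∧
  (∀ y : ℝ, 0 < y → y < w →
      Tendsto u (nhdsWithin (y * Real.cos α / Real.sin α, y) (OmegaReg α w)) atTop)

/-- The full strip `ℝ × (0, w)`. -/
def TStrip (w : ℝ) : Set (ℝ × ℝ) := {p | 0 < p.2 ∧ p.2 < w}

/-- The half strip `(0,∞) × (0, w)`. -/
def THalfStrip (w : ℝ) : Set (ℝ × ℝ) := {p | 0 < p.1 ∧ 0 < p.2 ∧ p.2 < w}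

/-- A pitchfork function of width `w`: a translator on `ℝ × (0,w)` with boundary value
`+∞` at `(x,0)` for `x < 0`, `−∞` at `(x,0)` for `x > 0`, and `−∞` at `(x,w)` for all `x`. -/
def IsPitchfork (w : ℝ) (u : ℝ × ℝ → ℝ) : Prop :=
  IsTranslatorOn (TStrip w) u ∧
  (∀ x : ℝ, x < 0 → Tendsto u (nhdsWithin (x, 0) (TStrip w)) atTop) ∧
  (∀ x : ℝ, 0 < x → Tendsto u (nhdsWithin (x, 0) (TStrip w)) atBot) ∧
  (∀ x : ℝ, Tendsto u (nhdsWithin (x, w) (TStrip w)) atBot)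

/-- The downward-tilted grim reaper `g_w` of width `w ≥ π`, normalized by `g_w(0,w/2) = 0`. -/
def grimTilt (w : ℝ) (p : ℝ × ℝ) : ℝ :=
  (w / π) ^ 2 * Real.log (Real.sin (π * p.2 / w)) - p.1 * Real.sqrt ((w / π) ^ 2 - 1)

/-! ### Divergence form of the translator equation -/

theorem pdx_contDiffOn {P : Set (ℝ × ℝ)} (hP : IsOpen P) {u : ℝ × ℝ → ℝ}
    (h : ContDiffOn ℝ (⊤ : ℕ∞) u P) : ContDiffOn ℝ (⊤ : ℕ∞) (pdx u) P :=
  (h.fderiv_of_isOpen hP (by norm_cast)).clm_apply contDiffOn_const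

theorem pdy_contDiffOn {P : Set (ℝ × ℝ)} (hP : IsOpen P) {u : ℝ × ℝ → ℝ}
    (h : ContDiffOn ℝ (⊤ : ℕ∞) u P) : ContDiffOn ℝ (⊤ : ℕ∞) (pdy u) P :=
  (h.fderiv_of_isOpen hP (by norm_cast)).clm_apply contDiffOn_const

theorem diffAt_of_contDiffOn {P : Set (ℝ × ℝ)} (hP : IsOpen P) {u : ℝ × ℝ → ℝ}
    (h : ContDiffOn ℝ (⊤ : ℕ∞) u P) {p : ℝ × ℝ} (hp : p ∈ P) : DifferentiableAt ℝ u p :=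
  (h.contDiffAt (hP.mem_nhds hp)).differentiableAt (by simp)

theorem fderiv_pair {u : ℝ × ℝ → ℝ} {p : ℝ × ℝ} (e : ℝ × ℝ) :
    fderiv ℝ u p e = e.1 * pdx u p + e.2 * pdy u p := by
  have : e = e.1 • ((1 : ℝ), (0 : ℝ)) + e.2 • ((0 : ℝ), (1 : ℝ)) := by
    ext <;> simp
  conv_lhs => rw [this]
  rw [map_add, map_smul, map_smul]
  rfl

theorem pd_comm {P : Set (ℝ × ℝ)} (hP : IsOpen P) {u : ℝ × ℝ → ℝ}
    (h : ContDiffOn ℝ (⊤ : ℕ∞) u P) {p : ℝ × ℝ} (hp : p ∈ P) :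
    pdx (pdy u) p = pdy (pdx u) p := by
  have hc := h.contDiffAt (hP.mem_nhds hp)
  have hs : IsSymmSndFDerivAt ℝ u p := hc.isSymmSndFDerivAt (by simp; norm_cast)
  have hd : DifferentiableAt ℝ (fderiv ℝ u) p :=
    (hc.fderiv_right (m := 1) (by norm_cast)).differentiableAt (by simp)
  have key : ∀ e f : ℝ × ℝ, fderiv ℝ (fun q => fderiv ℝ u q e) p f
      = fderiv ℝ (fderiv ℝ u) p f e := by
    intro e f
    have := hd.hasFDerivAt.clm_apply (hasFDerivAt_const e p)
    rw [this.fderiv]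
    simp
  unfold pdx pdy
  rw [key, key]
  exact hs.eq _ _

/-- `W = √(1 + |∇u|²)`, the area element of the graph of `u`. -/
def areaW (u : ℝ × ℝ → ℝ) (p : ℝ × ℝ) : ℝ := √(1 + pdx u p ^ 2 + pdy u p ^ 2)

theorem areaW_arg_pos (u : ℝ × ℝ → ℝ) (p : ℝ × ℝ) : 0 < 1 + pdx u p ^ 2 + pdy u p ^ 2 := by
  positivity

theorem one_le_areaW (u : ℝ × ℝ → ℝ) (p : ℝ × ℝ) : 1 ≤ areaW u p := by
  unfold areaW
  rw [Real.one_le_sqrt]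
  nlinarith [sq_nonneg (pdx u p), sq_nonneg (pdy u p)]

theorem areaW_ne_zero (u : ℝ × ℝ → ℝ) (p : ℝ × ℝ) : areaW u p ≠ 0 :=
  (zero_lt_one.trans_le (one_le_areaW u p)).ne'

theorem areaW_sq (u : ℝ × ℝ → ℝ) (p : ℝ × ℝ) :
    areaW u p ^ 2 = 1 + pdx u p ^ 2 + pdy u p ^ 2 :=
  Real.sq_sqrt (areaW_arg_pos u p).le

theorem areaW_contDiffOn {P : Set (ℝ × ℝ)} (hP : IsOpen P) {u : ℝ × ℝ → ℝ}
    (h : ContDiffOn ℝ (⊤ : ℕ∞) u P) : ContDiffOn ℝ (⊤ : ℕ∞) (areaW u) P := by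
  unfold areaW
  refine ContDiffOn.sqrt ?_ (fun p _ => (areaW_arg_pos u p).ne')
  exact (contDiffOn_const.add ((pdx_contDiffOn hP h).pow 2)).add ((pdy_contDiffOn hP h).pow 2)

/-- The divergence form `div (∇u / W) = 1 / W` of the translator equation. -/
theorem translator_div {P : Set (ℝ × ℝ)} (hP : IsOpen P) {u : ℝ × ℝ → ℝ}
    (h : IsTranslatorOn P u) {p : ℝ × ℝ} (hp : p ∈ P) :
    pdx (fun q => pdx u q / areaW u q) p + pdy (fun q => pdy u q / areaW u q) p
      = 1 / areaW u p := by
  have hx := (diffAt_of_contDiffOn hP (pdx_contDiffOn hP h.1) hp).hasFDerivAt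
  have hy := (diffAt_of_contDiffOn hP (pdy_contDiffOn hP h.1) hp).hasFDerivAt
  have hW1 := one_le_areaW u p
  have hWsq := areaW_sq u p
  have hW : HasFDerivAt (areaW u) _ p :=
    (((hx.pow 2).const_add 1).add (hy.pow 2)).sqrt (areaW_arg_pos u p).ne'
  have hW0 : areaW u p ≠ 0 := by positivity
  have hI := (hasDerivAt_inv hW0).comp_hasFDerivAt p hW
  have h1 : HasFDerivAt (fun q => pdx u q / areaW u q) _ p := hx.mul hI
  have h2 : HasFDerivAt (fun q => pdy u q / areaW u q) _ p := hy.mul hI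
  have e1 : pdx (fun q => pdx u q / areaW u q) p = _ := congrArg (fun A => A (1, 0)) h1.fderiv
  have e2 : pdy (fun q => pdy u q / areaW u q) p = _ := congrArg (fun A => A (0, 1)) h2.fderiv
  have c1 : fderiv ℝ (pdx u) p (1, 0) = pdx (pdx u) p := rfl
  have c2 : fderiv ℝ (pdy u) p (1, 0) = pdy (pdx u) p := pd_comm hP h.1 hp
  have c3 : fderiv ℝ (pdx u) p (0, 1) = pdy (pdx u) p := rfl
  have c4 : fderiv ℝ (pdy u) p (0, 1) = pdy (pdy u) p := rfl
  have hpde := h.2 p hp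
  change _ = 1 / areaW u p
  have hWdef : √(1 + pdx u p ^ 2 + pdy u p ^ 2) = areaW u p := rfl
  rw [e1, e2]
  simp [c1, c2, c3, c4, hWdef]
  generalize areaW u p = W at *
  generalize pdx u p = a at *
  generalize pdy u p = b at *
  generalize pdx (pdx u) p = A at *
  generalize pdy (pdx u) p = B at *
  generalize pdy (pdy u) p = C at *
  field_simp
  have : W ^ 2 * (A + C) - a * (a * A + b * B) - b * (a * B + b * C) = W ^ 2 := by
    rw [hWsq]; linarith
  nlinarith [this]

/-- `1 - ⟨ν_u, ν_v⟩` for the upward unit normals of the graphs of `u` and `v`. -/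
def normalGap (u v : ℝ × ℝ → ℝ) (p : ℝ × ℝ) : ℝ :=
  1 - (1 + pdx u p * pdx v p + pdy u p * pdy v p) / (areaW u p * areaW v p)

theorem normalGap_nonneg (u v : ℝ × ℝ → ℝ) (p : ℝ × ℝ) : 0 ≤ normalGap u v p := by
  have h1 := one_le_areaW u p
  have h2 := one_le_areaW v p
  unfold normalGap
  rw [sub_nonneg, div_le_one (by positivity)]
  apply le_of_sq_le_sq _ (by positivity)
  rw [mul_pow, areaW_sq, areaW_sq]
  nlinarith [sq_nonneg (pdx u p - pdx v p), sq_nonneg (pdy u p - pdy v p),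
    sq_nonneg (pdx u p * pdy v p - pdy u p * pdx v p)]

theorem grad_eq_of_normalGap {u v : ℝ × ℝ → ℝ} {p : ℝ × ℝ} (h : normalGap u v p = 0) :
    pdx u p = pdx v p ∧ pdy u p = pdy v p := by
  have h1 := one_le_areaW u p
  have h2 := one_le_areaW v p
  unfold normalGap at h
  rw [sub_eq_zero, eq_comm, div_eq_one_iff_eq (by positivity)] at h
  have h3 : (1 + pdx u p * pdx v p + pdy u p * pdy v p) ^ 2
      = (1 + pdx u p ^ 2 + pdy u p ^ 2) * (1 + pdx v p ^ 2 + pdy v p ^ 2) := by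
    rw [h, mul_pow, areaW_sq, areaW_sq]
  constructor <;>
  nlinarith [sq_nonneg (pdx u p - pdx v p), sq_nonneg (pdy u p - pdy v p),
    sq_nonneg (pdx u p * pdy v p - pdy u p * pdx v p)]

theorem normalGap_continuousOn {P : Set (ℝ × ℝ)} (hP : IsOpen P) {u v : ℝ × ℝ → ℝ}
    (hu : ContDiffOn ℝ (⊤ : ℕ∞) u P) (hv : ContDiffOn ℝ (⊤ : ℕ∞) v P) :
    ContinuousOn (normalGap u v) P := by
  have a1 := (pdx_contDiffOn hP hu).continuousOn
  have a2 := (pdy_contDiffOn hP hu).continuousOn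
  have a3 := (pdx_contDiffOn hP hv).continuousOn
  have a4 := (pdy_contDiffOn hP hv).continuousOn
  have a5 := (areaW_contDiffOn hP hu).continuousOn
  have a6 := (areaW_contDiffOn hP hv).continuousOn
  unfold normalGap
  refine continuousOn_const.sub (ContinuousOn.div (by fun_prop) (by fun_prop) ?_)
  intro p _
  have h1 := one_le_areaW u p
  have h2 := one_le_areaW v p
  positivity

/-- The flux identity behind uniqueness, in pointwise form with `X = ∇u / W`, `Y = ∇v / W'`. With
`e, f` playing the roles of `E'(u), E'(v)` and `E, F` those of `E(u), E(v)`, the left side is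
`div ((E(u) - E(v)) (X - Y))`. -/
theorem flux_algebra (u v : ℝ × ℝ → ℝ) (p : ℝ × ℝ) (e f E F : ℝ) :
    (e * pdx u p - f * pdx v p) * (pdx u p / areaW u p - pdx v p / areaW v p)
    + (e * pdy u p - f * pdy v p) * (pdy u p / areaW u p - pdy v p / areaW v p)
    + (E - F) * (1 / areaW u p - 1 / areaW v p)
    = (e * areaW u p + f * areaW v p) * normalGap u v p
      + ((E - e) - (F - f)) * (1 / areaW u p - 1 / areaW v p) := by
  have h1 := one_le_areaW u p
  have h2 := one_le_areaW v p
  have s1 := areaW_sq u p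
  have s2 := areaW_sq v p
  unfold normalGap
  generalize areaW u p = W at *
  generalize areaW v p = V at *
  generalize pdx u p = a at *
  generalize pdy u p = b at *
  generalize pdx v p = c at *
  generalize pdy v p = d at *
  have hW : W ≠ 0 := by positivity
  have hV : V ≠ 0 := by positivity
  have s3 : a ^ 2 = W ^ 2 - 1 - b ^ 2 := by linarith
  have s4 : c ^ 2 = V ^ 2 - 1 - d ^ 2 := by linarith
  field_simp
  ring_nf
  rw [s3, s4]
  ring

/-! ### The flux field and its divergence -/

/-- A `C¹` function on a bounded open set that vanishes near every boundary point has partial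
derivatives of integral zero. -/
theorem setIntegral_fderiv_eq_zero {P : Set (ℝ × ℝ)} (hP : IsOpen P)
    (hb : Bornology.IsBounded P) {f : ℝ × ℝ → ℝ} (hf : ContDiffOn ℝ 1 f P)
    (h0 : ∀ q ∈ closure P, q ∉ P → ∀ᶠ p in nhdsWithin q P, f p = 0) (e : ℝ × ℝ) :
    IntegrableOn (fun p => fderiv ℝ f p e) P ∧ ∫ p in P, fderiv ℝ f p e = 0 := by
  set g := P.indicator f with hg
  have hin : ∀ p ∈ P, g =ᶠ[nhds p] f := fun p hp => by
    filter_upwards [hP.mem_nhds hp] with q hq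
    exact indicator_of_mem hq f
  have hout : ∀ p, p ∉ P → g =ᶠ[nhds p] fun _ => 0 := fun p hp => by
    by_cases hc : p ∈ closure P
    · have := h0 p hc hp
      rw [eventually_nhdsWithin_iff] at this
      filter_upwards [this] with q hq
      by_cases hqP : q ∈ P
      · rw [hg, indicator_of_mem hqP, hq hqP]
      · exact indicator_of_notMem hqP f
    · filter_upwards [isClosed_closure.isOpen_compl.mem_nhds hc] with q hq
      exact indicator_of_notMem (fun h => hq (subset_closure h)) f
  have hgC : ContDiff ℝ 1 g := by
    rw [contDiff_iff_contDiffAt]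
    intro p
    by_cases hp : p ∈ P
    · exact (hf.contDiffAt (hP.mem_nhds hp)).congr_of_eventuallyEq (hin p hp)
    · exact contDiffAt_const.congr_of_eventuallyEq (hout p hp)
  have hgs : HasCompactSupport g := by
    refine HasCompactSupport.intro hb.isCompact_closure (fun x hx => ?_)
    exact indicator_of_notMem (fun h => hx (subset_closure h)) f
  have hd : (fun p => fderiv ℝ g p e) = P.indicator (fun p => fderiv ℝ f p e) := by
    ext p
    by_cases hp : p ∈ P
    · rw [indicator_of_mem hp, (hin p hp).fderiv_eq]
    · rw [indicator_of_notMem hp, (hout p hp).fderiv_eq]; simp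
  have hInt : Integrable (fun p => fderiv ℝ g p e) := by
    refine Continuous.integrable_of_hasCompactSupport ?_ ?_
    · exact (hgC.continuous_fderiv (by simp)).clm_apply continuous_const
    · exact (hgs.fderiv_apply (𝕜 := ℝ) e)
  have hz : ∫ p, fderiv ℝ g p e = 0 := by
    have := integral_mul_fderiv_eq_neg_fderiv_mul_of_integrable (μ := volume)
      (f := fun _ : ℝ × ℝ => (1 : ℝ)) (g := g) (v := e) (by simp) (by simpa using hInt)
      (by simpa using hgC.continuous.integrable_of_hasCompactSupport hgs)
      (fun x _ => by fun_prop) (fun x _ => (hgC.differentiable (by simp)).differentiableAt)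
    simpa using this
  rw [hd] at hInt hz
  exact ⟨(integrable_indicator_iff hP.measurableSet).1 hInt,
    by rwa [integral_indicator hP.measurableSet] at hz⟩

/-- Pointwise divergence of `ζ (E(u) - E(v)) (∇u / W_u - ∇v / W_v)`. -/
theorem div_flux {P : Set (ℝ × ℝ)} (hP : IsOpen P) {u v : ℝ × ℝ → ℝ}
    (hu : IsTranslatorOn P u) (hv : IsTranslatorOn P v) {E E' : ℝ → ℝ}
    (hE : ∀ t, HasDerivAt E (E' t) t) {ζ : ℝ × ℝ → ℝ} (hζ : ContDiff ℝ 1 ζ)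
    {p : ℝ × ℝ} (hp : p ∈ P) :
    fderiv ℝ (fun q => ζ q * ((E (u q) - E (v q)) *
        (pdx u q / areaW u q - pdx v q / areaW v q))) p (1, 0)
    + fderiv ℝ (fun q => ζ q * ((E (u q) - E (v q)) *
        (pdy u q / areaW u q - pdy v q / areaW v q))) p (0, 1)
    = ζ p * ((E' (u p) * areaW u p + E' (v p) * areaW v p) * normalGap u v p
        + ((E (u p) - E' (u p)) - (E (v p) - E' (v p))) * (1 / areaW u p - 1 / areaW v p))
      + (E (u p) - E (v p)) *
        (fderiv ℝ ζ p (1, 0) * (pdx u p / areaW u p - pdx v p / areaW v p)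
        + fderiv ℝ ζ p (0, 1) * (pdy u p / areaW u p - pdy v p / areaW v p)) := by
  have hW : ∀ {u}, ContDiffOn ℝ (⊤ : ℕ∞) u P → DifferentiableAt ℝ (areaW u) p := fun h =>
    diffAt_of_contDiffOn hP (areaW_contDiffOn hP h) hp
  have hx : ∀ {u}, ContDiffOn ℝ (⊤ : ℕ∞) u P →
      DifferentiableAt ℝ (fun q => pdx u q / areaW u q) p := fun {u} h => by
    simp_rw [div_eq_mul_inv]
    exact (diffAt_of_contDiffOn hP (pdx_contDiffOn hP h) hp).mul
      ((hW h).inv (areaW_ne_zero u p))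
  have hy : ∀ {u}, ContDiffOn ℝ (⊤ : ℕ∞) u P →
      DifferentiableAt ℝ (fun q => pdy u q / areaW u q) p := fun {u} h => by
    simp_rw [div_eq_mul_inv]
    exact (diffAt_of_contDiffOn hP (pdy_contDiffOn hP h) hp).mul
      ((hW h).inv (areaW_ne_zero u p))
  have hz := (hζ.differentiable (by simp)).differentiableAt (x := p) |>.hasFDerivAt
  have hEu := (hE (u p)).comp_hasFDerivAt p (diffAt_of_contDiffOn hP hu.1 hp).hasFDerivAt
  have hEv := (hE (v p)).comp_hasFDerivAt p (diffAt_of_contDiffOn hP hv.1 hp).hasFDerivAt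
  have h1 : HasFDerivAt (fun q => ζ q * ((E (u q) - E (v q)) *
        (pdx u q / areaW u q - pdx v q / areaW v q))) _ p :=
    hz.mul ((hEu.sub hEv).mul ((hx hu.1).hasFDerivAt.sub (hx hv.1).hasFDerivAt))
  have h2 : HasFDerivAt (fun q => ζ q * ((E (u q) - E (v q)) *
        (pdy u q / areaW u q - pdy v q / areaW v q))) _ p :=
    hz.mul ((hEu.sub hEv).mul ((hy hu.1).hasFDerivAt.sub (hy hv.1).hasFDerivAt))
  have d1 := translator_div hP hu hp
  have d2 := translator_div hP hv hp
  rw [← flux_algebra, ← d1, ← d2, h1.fderiv, h2.fderiv]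
  unfold pdx pdy
  simp
  ring

theorem abs_pdx_div_le (u : ℝ × ℝ → ℝ) (p : ℝ × ℝ) : |pdx u p / areaW u p| ≤ 1 := by
  have h1 := one_le_areaW u p
  rw [abs_div, abs_of_nonneg (by positivity : 0 ≤ areaW u p), div_le_one (by positivity)]
  apply abs_le_of_sq_le_sq _ (by positivity)
  rw [areaW_sq]
  nlinarith [sq_nonneg (pdy u p)]

theorem abs_pdy_div_le (u : ℝ × ℝ → ℝ) (p : ℝ × ℝ) : |pdy u p / areaW u p| ≤ 1 := by
  have h1 := one_le_areaW u p
  rw [abs_div, abs_of_nonneg (by positivity : 0 ≤ areaW u p), div_le_one (by positivity)]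
  apply abs_le_of_sq_le_sq _ (by positivity)
  rw [areaW_sq]
  nlinarith [sq_nonneg (pdx u p)]

theorem abs_inv_sub_inv_le (u v : ℝ × ℝ → ℝ) (p : ℝ × ℝ) :
    |1 / areaW u p - 1 / areaW v p| ≤ 1 := by
  have h1 := one_le_areaW u p
  have h2 := one_le_areaW v p
  have a1 : 1 / areaW u p ≤ 1 := (div_le_one (by positivity)).2 h1
  have a2 : 1 / areaW v p ≤ 1 := (div_le_one (by positivity)).2 h2
  have a3 : 0 ≤ 1 / areaW u p := by positivity
  have a4 : 0 ≤ 1 / areaW v p := by positivity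
  rw [abs_le]; constructor <;> linarith

/-- Lower bound for the divergence in `div_flux`: a nonnegative main term, an error from the
truncation `E`, and an error from the cutoff `ζ`. -/
theorem div_flux_ge {P : Set (ℝ × ℝ)} (hP : IsOpen P) {u v : ℝ × ℝ → ℝ}
    (hu : IsTranslatorOn P u) (hv : IsTranslatorOn P v) {E E' : ℝ → ℝ}
    (hE : ∀ t, HasDerivAt E (E' t) t) (hE0 : ∀ t, 0 ≤ E' t) {M : ℝ} (hM : ∀ t, |E t| ≤ M)
    {ζ : ℝ × ℝ → ℝ} (hζ : ContDiff ℝ 1 ζ) (hζ0 : ∀ p, 0 ≤ ζ p) (hζ1 : ∀ p, ζ p ≤ 1)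
    {p : ℝ × ℝ} (hp : p ∈ P) :
    ζ p * (E' (u p) * normalGap u v p)
      - |(E (u p) - E' (u p)) - (E (v p) - E' (v p))| - 8 * M * ‖fderiv ℝ ζ p‖
    ≤ fderiv ℝ (fun q => ζ q * ((E (u q) - E (v q)) *
        (pdx u q / areaW u q - pdx v q / areaW v q))) p (1, 0)
    + fderiv ℝ (fun q => ζ q * ((E (u q) - E (v q)) *
        (pdy u q / areaW u q - pdy v q / areaW v q))) p (0, 1) := by
  rw [div_flux hP hu hv hE hζ hp]
  have h1 := one_le_areaW u p
  have h2 := one_le_areaW v p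
  have hG := normalGap_nonneg u v p
  have t1 : E' (u p) * normalGap u v p
      ≤ (E' (u p) * areaW u p + E' (v p) * areaW v p) * normalGap u v p := by
    apply mul_le_mul_of_nonneg_right _ hG
    have := mul_nonneg (hE0 (v p)) (zero_le_one.trans h2)
    nlinarith [hE0 (u p)]
  have t1' := mul_le_mul_of_nonneg_left t1 (hζ0 p)
  set Q := (E (u p) - E' (u p)) - (E (v p) - E' (v p))
  set R := 1 / areaW u p - 1 / areaW v p
  have hR : |R| ≤ 1 := abs_inv_sub_inv_le u v p
  have t2 : |ζ p * (Q * R)| ≤ |Q| := by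
    rw [abs_mul, abs_mul, abs_of_nonneg (hζ0 p)]
    calc ζ p * (|Q| * |R|) ≤ 1 * (|Q| * 1) := by
          gcongr
          exact hζ1 p
      _ = |Q| := by ring
  have hop : ∀ e : ℝ × ℝ, ‖e‖ ≤ 1 → |fderiv ℝ ζ p e| ≤ ‖fderiv ℝ ζ p‖ := fun e he => by
    have := (fderiv ℝ ζ p).le_opNorm e
    rw [Real.norm_eq_abs] at this
    exact this.trans (mul_le_of_le_one_right (norm_nonneg _) he)
  have n1 := hop (1, 0) (by simp [Prod.norm_def])
  have n2 := hop (0, 1) (by simp [Prod.norm_def])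
  set D := ‖fderiv ℝ ζ p‖
  have hD : 0 ≤ D := norm_nonneg _
  have tx : |pdx u p / areaW u p - pdx v p / areaW v p| ≤ 2 :=
    (abs_sub _ _).trans (by linarith [abs_pdx_div_le u p, abs_pdx_div_le v p])
  have ty : |pdy u p / areaW u p - pdy v p / areaW v p| ≤ 2 :=
    (abs_sub _ _).trans (by linarith [abs_pdy_div_le u p, abs_pdy_div_le v p])
  have tE : |E (u p) - E (v p)| ≤ 2 * M :=
    (abs_sub _ _).trans (by linarith [hM (u p), hM (v p)])
  have t3 : |(E (u p) - E (v p)) *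
        (fderiv ℝ ζ p (1, 0) * (pdx u p / areaW u p - pdx v p / areaW v p)
        + fderiv ℝ ζ p (0, 1) * (pdy u p / areaW u p - pdy v p / areaW v p))| ≤ 8 * M * D := by
    rw [abs_mul]
    have : |fderiv ℝ ζ p (1, 0) * (pdx u p / areaW u p - pdx v p / areaW v p)
        + fderiv ℝ ζ p (0, 1) * (pdy u p / areaW u p - pdy v p / areaW v p)| ≤ 4 * D := by
      refine (abs_add_le _ _).trans ?_
      rw [abs_mul, abs_mul]
      have := mul_le_mul n1 tx (abs_nonneg _) hD
      have := mul_le_mul n2 ty (abs_nonneg _) hD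
      linarith
    have := mul_le_mul tE this (abs_nonneg _) ((abs_nonneg _).trans tE)
    linarith
  have := (abs_le.1 t2).1
  have := (abs_le.1 t3).1
  have e : ζ p * ((E' (u p) * areaW u p + E' (v p) * areaW v p) * normalGap u v p + Q * R)
    = ζ p * ((E' (u p) * areaW u p + E' (v p) * areaW v p) * normalGap u v p) + ζ p * (Q * R) := by
    ring
  rw [e]
  linarith

/-! ### Cutoff functions away from finitely many points -/

/-- In the plane a point can be cut off with a gradient of arbitrarily small `L¹` norm: the
gradient of a bump function rescaled to size `r` is of order `1 / r` on a set of area `r²`. -/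
theorem exists_cutoff_point (c : ℝ × ℝ) {ε : ℝ} (hε : 0 < ε) :
    ∃ ζ : ℝ × ℝ → ℝ, ContDiff ℝ 1 ζ ∧ (∀ p, 0 ≤ ζ p) ∧ (∀ p, ζ p ≤ 1) ∧
      (∀ᶠ p in nhds c, ζ p = 0) ∧ (∀ p, ε ≤ dist p c → ζ p = 1) ∧
      Integrable (fun p => ‖fderiv ℝ ζ p‖) ∧ ∫ p, ‖fderiv ℝ ζ p‖ ≤ ε := by
  let φ : ContDiffBump (0 : ℝ × ℝ) := ⟨1 / 2, 1, by norm_num, by norm_num⟩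
  have hφ : ContDiff ℝ 1 φ := φ.contDiff
  set I := ∫ p, ‖fderiv ℝ φ p‖ with hI
  have hI0 : 0 ≤ I := integral_nonneg (fun p => norm_nonneg _)
  set r := ε / (I + 1) with hr
  have hr0 : 0 < r := by positivity
  have hrε : r ≤ ε := div_le_self hε.le (by linarith)
  have hrI : r * I ≤ ε := by
    rw [hr, div_mul_eq_mul_div, div_le_iff₀ (by positivity)]
    nlinarith
  have hφint : Integrable (fun p => ‖fderiv ℝ φ p‖) := by
    refine Continuous.integrable_of_hasCompactSupport
      (hφ.continuous_fderiv (by simp)).norm ?_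
    exact (φ.hasCompactSupport.fderiv (𝕜 := ℝ)).norm
  have hd : ∀ p, ‖fderiv ℝ (fun p => 1 - φ (r⁻¹ • (p - c))) p‖
      = r⁻¹ * ‖fderiv ℝ φ (r⁻¹ • (p - c))‖ := by
    intro p
    have h1 : HasFDerivAt (fun p : ℝ × ℝ => r⁻¹ • (p - c))
        (r⁻¹ • ContinuousLinearMap.id ℝ (ℝ × ℝ)) p :=
      ((hasFDerivAt_id p).sub_const c).const_smul r⁻¹
    have h2 := ((hφ.differentiable (by simp)).differentiableAt
      (x := r⁻¹ • (p - c))).hasFDerivAt.comp p h1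
    have h3 := h2.const_sub 1
    have h4 : fderiv ℝ (fun p => 1 - φ (r⁻¹ • (p - c))) p = _ := h3.fderiv
    rw [h4, norm_neg, ContinuousLinearMap.comp_smul, norm_smul, ContinuousLinearMap.comp_id,
      Real.norm_of_nonneg (by positivity)]
  have hscale : ∫ p, r⁻¹ * ‖fderiv ℝ φ (r⁻¹ • (p - c))‖ = r * I := by
    rw [integral_const_mul,
      integral_sub_right_eq_self (fun p => ‖fderiv ℝ φ (r⁻¹ • p)‖) c,
      Measure.integral_comp_inv_smul_of_nonneg volume (fun p => ‖fderiv ℝ φ p‖) hr0.le]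
    simp
    field_simp
    rfl
  refine ⟨fun p => 1 - φ (r⁻¹ • (p - c)), ?_, fun p => ?_, fun p => ?_, ?_, ?_, ?_, ?_⟩
  · exact contDiff_const.sub (hφ.comp (by fun_prop))
  · linarith [φ.le_one (x := r⁻¹ • (p - c))]
  · linarith [φ.nonneg (x := r⁻¹ • (p - c))]
  · filter_upwards [Metric.ball_mem_nhds c (show 0 < r / 2 by positivity)] with p hp
    rw [φ.one_of_mem_closedBall, sub_self]
    rw [mem_closedBall_zero_iff, norm_smul, norm_inv, Real.norm_of_nonneg hr0.le]
    rw [Metric.mem_ball, dist_eq_norm] at hp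
    change r⁻¹ * ‖p - c‖ ≤ 1 / 2
    rw [inv_mul_le_iff₀ hr0]
    linarith
  · intro p hp
    change 1 - φ (r⁻¹ • (p - c)) = 1
    rw [φ.zero_of_le_dist, sub_zero]
    rw [dist_zero_right, norm_smul, norm_inv, Real.norm_of_nonneg hr0.le, ← dist_eq_norm]
    change 1 ≤ r⁻¹ * _
    rw [le_inv_mul_iff₀ hr0]
    linarith
  · simp_rw [hd]
    refine Integrable.const_mul ?_ _
    exact ((integrable_comp_smul_iff volume (fun p => ‖fderiv ℝ φ p‖)
      (inv_ne_zero hr0.ne')).2 hφint).comp_sub_right c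
  · simp_rw [hd]
    rw [hscale]; exact hrI

theorem exists_cutoff (F : Finset (ℝ × ℝ)) {ε : ℝ} (hε : 0 < ε) :
    ∃ ζ : ℝ × ℝ → ℝ, ContDiff ℝ 1 ζ ∧ (∀ p, 0 ≤ ζ p) ∧ (∀ p, ζ p ≤ 1) ∧
      (∀ c ∈ F, ∀ᶠ p in nhds c, ζ p = 0) ∧ (∀ p, (∀ c ∈ F, ε ≤ dist p c) → ζ p = 1) ∧
      Integrable (fun p => ‖fderiv ℝ ζ p‖) ∧ ∫ p, ‖fderiv ℝ ζ p‖ ≤ ε := by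
  classical
  induction F using Finset.induction_on generalizing ε with
  | empty => exact ⟨fun _ => 1, contDiff_const, by simp, by simp, by simp, by simp, by simp,
      by simp [hε.le]⟩
  | insert c F _ ih =>
    obtain ⟨ζ, h1, h2, h3, h4, h5, h6, h7⟩ := ih (half_pos hε)
    obtain ⟨η, k1, k2, k3, k4, k5, k6, k7⟩ := exists_cutoff_point c (half_pos hε)
    have hle : ∀ p, ‖fderiv ℝ (fun p => η p * ζ p) p‖ ≤ ‖fderiv ℝ η p‖ + ‖fderiv ℝ ζ p‖ := by
      intro p
      have e : fderiv ℝ (fun p => η p * ζ p) p = _ :=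
        (((k1.differentiable (by simp)).differentiableAt (x := p)).hasFDerivAt.mul
        ((h1.differentiable (by simp)).differentiableAt (x := p)).hasFDerivAt).fderiv
      rw [e]
      refine (norm_add_le _ _).trans ?_
      rw [norm_smul, norm_smul, Real.norm_of_nonneg (k2 p), Real.norm_of_nonneg (h2 p), add_comm]
      exact add_le_add (mul_le_of_le_one_left (norm_nonneg _) (h3 p))
        (mul_le_of_le_one_left (norm_nonneg _) (k3 p))
    have hC : ContDiff ℝ 1 (fun p => η p * ζ p) := k1.mul h1
    have hInt : Integrable (fun p => ‖fderiv ℝ (fun p => η p * ζ p) p‖) := by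
      refine (k6.add h6).mono' (hC.continuous_fderiv (by simp)).norm.aestronglyMeasurable ?_
      exact Eventually.of_forall (fun p => by simpa using hle p)
    refine ⟨fun p => η p * ζ p, hC, fun p => mul_nonneg (k2 p) (h2 p),
      fun p => mul_le_one₀ (k3 p) (h2 p) (h3 p), ?_, ?_, hInt, ?_⟩
    · intro d hd
      rcases Finset.mem_insert.1 hd with rfl | hd
      · filter_upwards [k4] with p hp
        rw [hp, zero_mul]
      · filter_upwards [h4 d hd] with p hp
        rw [hp, mul_zero]
    · intro p hp
      change η p * ζ p = 1
      rw [k5 p (by linarith [hp c (Finset.mem_insert_self _ _)]),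
        h5 p (fun d hd => by linarith [hp d (Finset.mem_insert_of_mem hd)]), one_mul]
    · refine (integral_mono hInt (k6.add h6) hle).trans ?_
      simp only [Pi.add_apply]
      rw [integral_add k6 h6]
      linarith

/-! ### Truncated exponentials -/

/-- A continuous bump equal to `1` on `[-n, n]` and to `0` outside `(-n-1, n+1)`. -/
def trunc (n : ℕ) (z : ℝ) : ℝ := max 0 (min 1 (n + 1 - |z|))

/-- A primitive of `exp * trunc n`: it agrees with `exp - 1` on `[-n, n]` and is constant near
`±∞`. -/
def truncExp (n : ℕ) (t : ℝ) : ℝ := ∫ z in (0 : ℝ)..t, rexp z * trunc n z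

theorem trunc_continuous (n : ℕ) : Continuous (trunc n) := by
  unfold trunc; fun_prop

theorem trunc_nonneg (n : ℕ) (z : ℝ) : 0 ≤ trunc n z := le_max_left _ _

theorem trunc_le_one (n : ℕ) (z : ℝ) : trunc n z ≤ 1 :=
  max_le zero_le_one (min_le_left _ _)

theorem trunc_eq_one {n : ℕ} {z : ℝ} (h : |z| ≤ n) : trunc n z = 1 := by
  unfold trunc
  rw [min_eq_left (by linarith), max_eq_right zero_le_one]

theorem trunc_eq_zero {n : ℕ} {z : ℝ} (h : n + 1 ≤ |z|) : trunc n z = 0 := by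
  unfold trunc
  exact max_eq_left ((min_le_right _ _).trans (by linarith))

theorem expTrunc_continuous (n : ℕ) : Continuous (fun z => rexp z * trunc n z) :=
  Real.continuous_exp.mul (trunc_continuous n)

theorem truncExp_hasDerivAt (n : ℕ) (t : ℝ) :
    HasDerivAt (truncExp n) (rexp t * trunc n t) t :=
  intervalIntegral.integral_hasDerivAt_right ((expTrunc_continuous n).intervalIntegrable _ _)
    ((expTrunc_continuous n).stronglyMeasurableAtFilter _ _) (expTrunc_continuous n).continuousAt

theorem truncExp_contDiff (n : ℕ) : ContDiff ℝ 1 (truncExp n) := by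
  rw [contDiff_one_iff_deriv]
  refine ⟨fun t => (truncExp_hasDerivAt n t).differentiableAt, ?_⟩
  have : deriv (truncExp n) = fun t => rexp t * trunc n t :=
    funext fun t => (truncExp_hasDerivAt n t).deriv
  rw [this]; exact expTrunc_continuous n

theorem truncExp_sub (n : ℕ) (s t : ℝ) :
    truncExp n t - truncExp n s = ∫ z in s..t, rexp z * trunc n z :=
  intervalIntegral.integral_interval_sub_left ((expTrunc_continuous n).intervalIntegrable _ _)
    ((expTrunc_continuous n).intervalIntegrable _ _)

theorem truncExp_mono (n : ℕ) : Monotone (truncExp n) :=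
  monotone_of_deriv_nonneg (fun t => (truncExp_hasDerivAt n t).differentiableAt) (fun t => by
    rw [(truncExp_hasDerivAt n t).deriv]
    exact mul_nonneg (exp_pos _).le (trunc_nonneg _ _))

theorem truncExp_eq_of_ge {n : ℕ} {t : ℝ} (h : n + 1 ≤ t) :
    truncExp n t = truncExp n (n + 1) := by
  rw [← sub_eq_zero, truncExp_sub]
  refine intervalIntegral.integral_zero_ae (Eventually.of_forall fun z hz => ?_)
  rw [uIoc_of_le h] at hz
  rw [trunc_eq_zero (hz.1.le.trans (le_abs_self z)), mul_zero]

theorem truncExp_eq_of_le {n : ℕ} {t : ℝ} (h : t ≤ -(n + 1)) :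
    truncExp n t = truncExp n (-(n + 1)) := by
  rw [eq_comm, ← sub_eq_zero, truncExp_sub]
  refine intervalIntegral.integral_zero_ae (Eventually.of_forall fun z hz => ?_)
  rw [uIoc_of_le h] at hz
  rw [trunc_eq_zero ((by linarith [hz.2] : (n : ℝ) + 1 ≤ -z).trans (neg_le_abs z)), mul_zero]

theorem truncExp_eq {n : ℕ} {t : ℝ} (h : |t| ≤ n) : truncExp n t = rexp t - 1 := by
  have : truncExp n t = ∫ z in (0 : ℝ)..t, rexp z := by
    refine intervalIntegral.integral_congr fun z hz => ?_
    have hz' : |z| ≤ |t| := by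
      have := abs_sub_left_of_mem_uIcc hz
      simpa using this
    change rexp z * trunc n z = rexp z
    rw [trunc_eq_one (hz'.trans h), mul_one]
  rw [this, integral_exp, Real.exp_zero]

theorem abs_truncExp_le (n : ℕ) (t : ℝ) : |truncExp n t| ≤ rexp t + 1 := by
  have h0 : truncExp n 0 = 0 := by simp [truncExp]
  rcases le_total 0 t with ht | ht
  · have h1 : 0 ≤ truncExp n t := h0 ▸ truncExp_mono n ht
    have h2 : truncExp n t ≤ ∫ z in (0 : ℝ)..t, rexp z :=
      intervalIntegral.integral_mono_on ht ((expTrunc_continuous n).intervalIntegrable _ _)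
        (Real.continuous_exp.intervalIntegrable _ _)
        (fun z _ => mul_le_of_le_one_right (exp_pos _).le (trunc_le_one n z))
    rw [integral_exp, Real.exp_zero] at h2
    rw [abs_of_nonneg h1]; linarith
  · have h1 : truncExp n t ≤ 0 := h0 ▸ truncExp_mono n ht
    have h2 : truncExp n 0 - truncExp n t ≤ ∫ z in t..(0 : ℝ), rexp z := by
      rw [truncExp_sub]
      exact intervalIntegral.integral_mono_on ht ((expTrunc_continuous n).intervalIntegrable _ _)
        (Real.continuous_exp.intervalIntegrable _ _)
        (fun z _ => mul_le_of_le_one_right (exp_pos _).le (trunc_le_one n z))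
    rw [integral_exp, Real.exp_zero, h0] at h2
    rw [abs_of_nonpos h1]
    linarith [exp_pos t]

theorem abs_truncExp_le_const (n : ℕ) (t : ℝ) : |truncExp n t| ≤ rexp (n + 1) + 1 := by
  rcases le_total t (n + 1) with ht | ht
  · exact (abs_truncExp_le n t).trans (by gcongr)
  · rw [truncExp_eq_of_ge ht]; exact abs_truncExp_le n _

/-! ### Logarithmic barriers -/

theorem second_deriv_nonpos_of_isLocalMax {φ φ' : ℝ → ℝ} {m : ℝ} (hmax : IsLocalMax φ 0)
    (h1 : ∀ᶠ t in nhds 0, HasDerivAt φ (φ' t) t) (h2 : HasDerivAt φ' m 0) : m ≤ 0 := by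
  by_contra! hm
  have hd : deriv φ =ᶠ[nhds 0] φ' := h1.mono fun t ht => ht.deriv
  have hdd : deriv (deriv φ) 0 = m := by rw [hd.deriv_eq, h2.deriv]
  have hmin : IsLocalMin φ 0 :=
    isLocalMin_of_deriv_deriv_pos (by rw [hdd]; exact hm) hmax.deriv_eq_zero
      h1.self_of_nhds.continuousAt
  have hc : φ =ᶠ[nhds 0] fun _ => φ 0 := by
    filter_upwards [hmax, hmin] with t a b
    exact le_antisymm a b
  have : deriv (deriv φ) 0 = 0 := by
    rw [(hc.deriv).deriv_eq]; simp
  linarith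

/-- The algebra behind `no_touching`: `m, n` and `X, Y, Z` are the first and second derivatives of
the translator at the contact point. -/
theorem no_touching_algebra {a b A q τ s m n X Y Z : ℝ} (hab : a ^ 2 + b ^ 2 = 1) (hA : 0 < A)
    (hq : 0 < q) (hqA : q * (1 + A) = 1 + A / 2) (hd : 0 < τ) (hs : (A * s) ^ 2 ≤ A / 2)
    (hpde : (1 + n ^ 2) * X - 2 * m * n * Y + (1 + m ^ 2) * Z = 1 + m ^ 2 + n ^ 2)
    (k1 : 1 * m + 0 * n + q * ((a * 1 + b * 0) / τ) + A * s * (-b * 1 + a * 0) = 0)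
    (k2 : 0 * m + 1 * n + q * ((a * 0 + b * 1) / τ) + A * s * (-b * 0 + a * 1) = 0)
    (i1 : 1 ^ 2 * X + 2 * 1 * 0 * Y + 0 ^ 2 * Z
      ≤ q * (a * 1 + b * 0) ^ 2 / τ ^ 2 - A * (-b * 1 + a * 0) ^ 2)
    (i2 : 0 ^ 2 * X + 2 * 0 * 1 * Y + 1 ^ 2 * Z
      ≤ q * (a * 0 + b * 1) ^ 2 / τ ^ 2 - A * (-b * 0 + a * 1) ^ 2)
    (k3 : (-n) ^ 2 * X + 2 * (-n) * m * Y + m ^ 2 * Z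
      ≤ q * (a * -n + b * m) ^ 2 / τ ^ 2 - A * (-b * -n + a * m) ^ 2) : False := by
  have hm : m = -(a * (q / τ) - b * (A * s)) := by
    have := k1; field_simp at this ⊢; linarith
  have hn : n = -(b * (q / τ) + a * (A * s)) := by
    have := k2; field_simp at this ⊢; linarith
  set α := q / τ with hα
  set β := A * s with hβ
  have j1 : a * -n + b * m = β := by
    rw [hm, hn]; linear_combination β * hab
  have j2 : -b * -n + a * m = -α := by
    rw [hm, hn]; linear_combination (-α) * hab
  have j3 : m ^ 2 + n ^ 2 = α ^ 2 + β ^ 2 := by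
    rw [hm, hn]; linear_combination (α ^ 2 + β ^ 2) * hab
  rw [j1, j2] at k3
  -- the Hessian inequalities in the directions `(1, 0)`, `(0, 1)` and `(-n, m)` add up to the
  -- left side of the translator equation
  have hsum : 1 + α ^ 2 + β ^ 2 ≤ (q / τ ^ 2) * (1 + β ^ 2) - A * (1 + α ^ 2) := by
    have e : (q / τ ^ 2) * (1 + β ^ 2) - A * (1 + α ^ 2) =
      (q * (a * 1 + b * 0) ^ 2 / τ ^ 2 - A * (-b * 1 + a * 0) ^ 2)
      + (q * (a * 0 + b * 1) ^ 2 / τ ^ 2 - A * (-b * 0 + a * 1) ^ 2)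
      + (q * β ^ 2 / τ ^ 2 - A * (-α) ^ 2) := by
      linear_combination (A - q / τ ^ 2) * hab
    rw [e]
    nlinarith
  have hα2 : α ^ 2 = (q / τ ^ 2) * q := by rw [hα]; field_simp
  have hqt : 0 < q / τ ^ 2 := by positivity
  have : (q / τ ^ 2) * (1 + β ^ 2) ≤ (q / τ ^ 2) * (q * (1 + A)) := by
    apply mul_le_mul_of_nonneg_left _ hqt.le
    rw [hqA]; linarith
  nlinarith [sq_nonneg β]

/-- With `0 < A`, `q (1 + A) = 1 + A / 2` and `A² s² ≤ A / 2`, the function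
`-q log d - A s² / 2` of rotated orthonormal coordinates `(d, s)` is a strict supersolution of the
translator equation, so it cannot touch a translator from above. -/
theorem no_touching {P : Set (ℝ × ℝ)} (hP : IsOpen P) {u : ℝ × ℝ → ℝ}
    (hu : IsTranslatorOn P u) {a b c A q : ℝ} (hab : a ^ 2 + b ^ 2 = 1) (hA : 0 < A)
    (hq : 0 < q) (hqA : q * (1 + A) = 1 + A / 2) {p : ℝ × ℝ} (hp : p ∈ P)
    (hs : (A * (-b * p.1 + a * p.2)) ^ 2 ≤ A / 2) (hd : 0 < a * p.1 + b * p.2 - c)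
    (hmax : IsLocalMax (fun x : ℝ × ℝ => u x + q * Real.log (a * x.1 + b * x.2 - c)
      + A / 2 * (-b * x.1 + a * x.2) ^ 2) p) : False := by
  set τ := a * p.1 + b * p.2 - c with hτ
  set s := -b * p.1 + a * p.2 with hsdef
  have key : ∀ e1 e2 : ℝ,
      (e1 * pdx u p + e2 * pdy u p + q * ((a * e1 + b * e2) / τ) + A * s * (-b * e1 + a * e2) = 0)
      ∧ e1 ^ 2 * pdx (pdx u) p + 2 * e1 * e2 * pdy (pdx u) p + e2 ^ 2 * pdy (pdy u) p
        ≤ q * (a * e1 + b * e2) ^ 2 / τ ^ 2 - A * (-b * e1 + a * e2) ^ 2 := by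
    intro e1 e2
    set k1 := a * e1 + b * e2 with hk1
    set k2 := -b * e1 + a * e2 with hk2
    let γ : ℝ → ℝ × ℝ := fun t => p + t • (e1, e2)
    have hγ0 : γ 0 = p := by simp [γ]
    have hγ : ∀ t, HasDerivAt γ (e1, e2) t := fun t => by
      have := ((hasDerivAt_id t).smul_const (e1, e2)).const_add p
      rw [one_smul] at this
      exact this
    have hγc : ContinuousAt γ 0 := (hγ 0).continuousAt
    have hline : ∀ f : ℝ × ℝ → ℝ, ∀ t, DifferentiableAt ℝ f (γ t) →
        HasDerivAt (fun t => f (γ t)) (e1 * pdx f (γ t) + e2 * pdy f (γ t)) t := fun f t hf => by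
      have := hf.hasFDerivAt.comp_hasDerivAt t (hγ t)
      rwa [fderiv_pair] at this
    have hd1 : ∀ t, HasDerivAt (fun t => a * (γ t).1 + b * (γ t).2 - c) k1 t := fun t => by
      have : (fun t => a * (γ t).1 + b * (γ t).2 - c) = fun t => τ + t * k1 := by
        funext t; simp [γ, hτ, hk1]; ring
      rw [this]
      simpa using ((hasDerivAt_id t).mul_const k1).const_add τ
    have hs1 : ∀ t, HasDerivAt (fun t => -b * (γ t).1 + a * (γ t).2) k2 t := fun t => by
      have : (fun t => -b * (γ t).1 + a * (γ t).2) = fun t => s + t * k2 := by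
        funext t; simp [γ, hsdef, hk2]; ring
      rw [this]
      simpa using ((hasDerivAt_id t).mul_const k2).const_add s
    have evP : ∀ᶠ t in nhds (0 : ℝ), γ t ∈ P :=
      hγc.eventually_mem (by rw [hγ0]; exact hP.mem_nhds hp)
    have evd : ∀ᶠ t in nhds (0 : ℝ), 0 < a * (γ t).1 + b * (γ t).2 - c :=
      (hd1 0).continuousAt.eventually_const_lt (by simp only [hγ0]; exact hd)
    have hmax' : IsLocalMax (fun t => u (γ t) + q * Real.log (a * (γ t).1 + b * (γ t).2 - c)
        + A / 2 * (-b * (γ t).1 + a * (γ t).2) ^ 2) 0 := by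
      have := hγc.tendsto.eventually (by rw [hγ0]; exact hmax)
      filter_upwards [this] with t ht
      simpa only [hγ0] using ht
    have h1 : ∀ᶠ t in nhds (0 : ℝ), HasDerivAt
        (fun t => u (γ t) + q * Real.log (a * (γ t).1 + b * (γ t).2 - c)
          + A / 2 * (-b * (γ t).1 + a * (γ t).2) ^ 2)
        ((e1 * pdx u (γ t) + e2 * pdy u (γ t)) + q * (k1 / (a * (γ t).1 + b * (γ t).2 - c))
          + A * (-b * (γ t).1 + a * (γ t).2) * k2) t := by
      filter_upwards [evP, evd] with t htP htd
      have := ((hline u t (diffAt_of_contDiffOn hP hu.1 htP)).add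
        (((hd1 t).log htd.ne').const_mul q)).add (((hs1 t).pow 2).const_mul (A / 2))
      refine this.congr_deriv ?_
      simp
      ring
    have h2 : HasDerivAt (fun t => (e1 * pdx u (γ t) + e2 * pdy u (γ t))
        + q * (k1 / (a * (γ t).1 + b * (γ t).2 - c))
          + A * (-b * (γ t).1 + a * (γ t).2) * k2)
        (e1 ^ 2 * pdx (pdx u) p + 2 * e1 * e2 * pdy (pdx u) p + e2 ^ 2 * pdy (pdy u) p
          - q * k1 ^ 2 / τ ^ 2 + A * k2 ^ 2) 0 := by
      have dx := hline (pdx u) 0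
        (by rw [hγ0]; exact diffAt_of_contDiffOn hP (pdx_contDiffOn hP hu.1) hp)
      have dy := hline (pdy u) 0
        (by rw [hγ0]; exact diffAt_of_contDiffOn hP (pdy_contDiffOn hP hu.1) hp)
      have hd0 : a * (γ 0).1 + b * (γ 0).2 - c ≠ 0 := by rw [hγ0]; exact hd.ne'
      have := (((dx.const_mul e1).add (dy.const_mul e2)).add
        (((hasDerivAt_const (0 : ℝ) k1).div (hd1 0) hd0).const_mul q)).add
        (((hs1 0).const_mul A).mul_const k2)
      refine this.congr_deriv ?_
      simp only [hγ0, pd_comm hP hu.1 hp, ← hτ]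
      field_simp
      ring
    have hz := hmax'.hasDerivAt_eq_zero h1.self_of_nhds
    have hm := second_deriv_nonpos_of_isLocalMax hmax' h1 h2
    simp only [hγ0, ← hτ, ← hsdef] at hz
    exact ⟨hz, by linarith⟩
  have k1 := key 1 0
  have k2 := key 0 1
  have k3 := (key (-pdy u p) (pdx u p)).2
  have hpde := hu.2 p hp
  exact no_touching_algebra hab hA hq hqA hd hs hpde k1.1 k2.1 k1.2 k2.2 k3

/-- Near a line on one side of which the only boundary values are `-∞`, a translator satisfies
`exp u ≤ C d ^ (-q)` with `q < 1`, `d` being the distance to the line. -/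
theorem exp_le_dist_rpow {P : Set (ℝ × ℝ)} (hP : IsOpen P) (hb : Bornology.IsBounded P)
    {u : ℝ × ℝ → ℝ} (hu : IsTranslatorOn P u) {a b c d₀ : ℝ} (hab : a ^ 2 + b ^ 2 = 1)
    (hd₀ : 0 < d₀)
    (hbd : ∀ x ∈ closure P, x ∉ P → 0 < a * x.1 + b * x.2 - c → a * x.1 + b * x.2 - c ≤ d₀ →
      Tendsto u (nhdsWithin x P) atBot) :
    ∃ C q : ℝ, 0 < q ∧ q < 1 ∧ ∀ p ∈ P, 0 < a * p.1 + b * p.2 - c → a * p.1 + b * p.2 - c ≤ d₀ →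
      rexp (u p) ≤ C * (a * p.1 + b * p.2 - c) ^ (-q) := by
  set d : ℝ × ℝ → ℝ := fun p => a * p.1 + b * p.2 - c with hd
  set s : ℝ × ℝ → ℝ := fun p => -b * p.1 + a * p.2 with hs
  have hdc : Continuous d := by fun_prop
  have hsc : Continuous s := by fun_prop
  have hK : IsCompact (closure P) := hb.isCompact_closure
  obtain ⟨S, hS⟩ := hK.exists_bound_of_continuousOn hsc.continuousOn
  set T := max S 1 with hT
  have hT1 : 1 ≤ T := le_max_right _ _
  have hsT : ∀ x ∈ closure P, s x ^ 2 ≤ T ^ 2 := fun x hx => by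
    have : |s x| ≤ T := (hS x hx).trans (le_max_left _ _)
    exact sq_le_sq' (by linarith [(abs_le.1 this).1]) (abs_le.1 this).2
  -- `A` is small enough for `A² s² ≤ A / 2` on `P`, and `q` is the exponent matched to it
  set A := 1 / (2 * T ^ 2) with hA
  have hA0 : 0 < A := by positivity
  have hAT : A * T ^ 2 = 1 / 2 := by rw [hA]; field_simp
  set q := (1 + A / 2) / (1 + A) with hq
  have hq0 : 0 < q := by positivity
  have hq1 : q < 1 := by rw [hq, div_lt_one (by positivity)]; linarith
  have hqA : q * (1 + A) = 1 + A / 2 := by rw [hq]; field_simp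
  -- `exp u`, continued by `0` through the boundary points with value `-∞`
  set F : ℝ × ℝ → ℝ := P.indicator (fun p => rexp (u p)) with hF
  have hF0 : ∀ x, 0 ≤ F x := fun x => indicator_nonneg (fun _ _ => (exp_pos _).le) x
  have hFc : ∀ x ∈ closure P, 0 < d x → d x ≤ d₀ → ContinuousAt F x := by
    intro x hx h1 h2
    by_cases hxP : x ∈ P
    · have : ContinuousAt (fun p => rexp (u p)) x :=
        ((hu.1.continuousOn).continuousAt (hP.mem_nhds hxP)).rexp
      refine this.congr ?_
      filter_upwards [hP.mem_nhds hxP] with y hy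
      exact (indicator_of_mem hy (fun p => rexp (u p))).symm
    · have ht := Real.tendsto_exp_atBot.comp (hbd x hx hxP h1 h2)
      have hFx : F x = 0 := indicator_of_notMem hxP _
      rw [ContinuousAt, hFx, Metric.tendsto_nhds]
      intro ε hε
      have := (Metric.tendsto_nhds.1 ht) ε hε
      rw [eventually_nhdsWithin_iff] at this
      filter_upwards [this] with y hy
      by_cases hyP : y ∈ P
      · rw [hF, indicator_of_mem hyP]; exact hy hyP
      · rw [hF, indicator_of_notMem hyP]; simpa using hε
  have hK0 : IsCompact (closure P ∩ {x | d x = d₀}) :=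
    hK.inter_right (isClosed_eq hdc continuous_const)
  obtain ⟨B₀, hB₀⟩ := hK0.exists_bound_of_continuousOn (f := F) (fun x hx =>
    (hFc x hx.1 (by rw [hx.2]; exact hd₀) (le_of_eq hx.2)).continuousWithinAt)
  set B₁ := max B₀ 0 with hB₁
  have hB10 : 0 ≤ B₁ := le_max_right _ _
  have hFB : ∀ x ∈ closure P, d x = d₀ → F x ≤ B₁ := fun x h1 h2 =>
    ((le_abs_self _).trans (hB₀ x ⟨h1, h2⟩)).trans (le_max_left _ _)
  set C := B₁ * d₀ ^ q * rexp (A / 2 * T ^ 2) with hC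
  have hC0 : 0 ≤ C := by positivity
  -- the maximum of `exp (u - barrier)`, the barrier being shifted by `ε` off the line to keep it
  -- finite there, is attained on `d = d₀`: an interior maximum would be a forbidden contact
  have main : ∀ ε, 0 < ε → ε < d₀ → ∀ p ∈ P, ε ≤ d p → d p ≤ d₀ →
      F p * (d p - ε) ^ q * rexp (A / 2 * s p ^ 2) ≤ C := by
    intro ε hε hεd p hp h1 h2
    set f : ℝ × ℝ → ℝ := fun p => F p * (d p - ε) ^ q * rexp (A / 2 * s p ^ 2) with hf
    set K := closure P ∩ (d ⁻¹' Icc ε d₀) with hKdef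
    have hKc : IsCompact K := hK.inter_right (isClosed_Icc.preimage hdc)
    have hpc : Continuous (fun x => (d x - ε) ^ q) :=
      (hdc.sub continuous_const).rpow_const (fun _ => Or.inr hq0.le)
    have hfc : ContinuousOn f K := fun x hx =>
      (((hFc x hx.1 (hε.trans_le hx.2.1) hx.2.2).mul hpc.continuousAt).mul
        (by fun_prop)).continuousWithinAt
    obtain ⟨x, hxK, hxmax⟩ := hKc.exists_isMaxOn ⟨p, subset_closure hp, h1, h2⟩ hfc
    refine (hxmax (show p ∈ K from ⟨subset_closure hp, h1, h2⟩)).trans ?_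
    change f x ≤ C
    by_contra! hlt
    have hfpos : 0 < f x := hC0.trans_lt hlt
    have hxP : x ∈ P := by
      by_contra hxP
      have : F x = 0 := indicator_of_notMem hxP _
      simp [hf, this] at hfpos
    have hxε : ε < d x := by
      refine lt_of_le_of_ne hxK.2.1 (fun h => ?_)
      simp [hf, ← h, Real.zero_rpow hq0.ne'] at hfpos
    have hxd : d x < d₀ := by
      refine lt_of_le_of_ne hxK.2.2 (fun h => ?_)
      have : f x ≤ C := by
        have e1 := hFB x hxK.1 h
        have e2 : (d x - ε) ^ q ≤ d₀ ^ q :=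
          Real.rpow_le_rpow (by linarith) (by rw [h]; linarith) hq0.le
        have e3 : rexp (A / 2 * s x ^ 2) ≤ rexp (A / 2 * T ^ 2) := by
          have := hsT x hxK.1
          gcongr
        have e4 : 0 ≤ (d x - ε) ^ q := Real.rpow_nonneg (by linarith) _
        have := mul_le_mul e1 e2 e4 hB10
        exact mul_le_mul this e3 (exp_pos _).le (by positivity)
      linarith
    refine no_touching hP hu (c := c + ε) hab hA0 hq0 hqA hxP ?_ ?_ ?_
    · have := hsT x hxK.1
      change (A * s x) ^ 2 ≤ A / 2
      have : A * s x ^ 2 ≤ 1 / 2 := by rw [← hAT]; gcongr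
      nlinarith
    · have : a * x.1 + b * x.2 - c = d x := rfl
      linarith
    · have hlog : ∀ y ∈ P, ε < d y →
          u y + q * Real.log (a * y.1 + b * y.2 - (c + ε)) + A / 2 * (-b * y.1 + a * y.2) ^ 2
          = Real.log (f y) := by
        intro y hyP hy
        have e0 : a * y.1 + b * y.2 - (c + ε) = d y - ε := by simp only [hd]; ring
        have e1 : F y = rexp (u y) := indicator_of_mem hyP _
        have e2 : 0 < d y - ε := by linarith
        rw [e0, hf]
        simp only [e1]
        rw [Real.log_mul (by positivity) (exp_pos _).ne', Real.log_mul (exp_pos _).ne'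
          (by positivity), Real.log_exp, Real.log_exp, Real.log_rpow e2]
      have ev1 : ∀ᶠ y in nhds x, ε < d y := hdc.continuousAt.eventually_const_lt hxε
      have ev2 : ∀ᶠ y in nhds x, d y < d₀ := hdc.continuousAt.eventually_lt_const hxd
      filter_upwards [hP.mem_nhds hxP, ev1, ev2] with y hyP hy1 hy2
      rw [hlog y hyP hy1, hlog x hxP hxε]
      have e1 : F y = rexp (u y) := indicator_of_mem hyP _
      have hfy : 0 < f y := by
        have : 0 < d y - ε := by linarith
        simp only [hf, e1]; positivity
      exact Real.log_le_log hfy (hxmax ⟨subset_closure hyP, hy1.le, hy2.le⟩)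
  refine ⟨C, q, hq0, hq1, fun p hp h1 h2 => ?_⟩
  have h1' : 0 < d p := h1
  have hlim : Tendsto (fun ε => F p * (d p - ε) ^ q * rexp (A / 2 * s p ^ 2)) (nhdsWithin 0 (Ioi 0))
      (nhds (F p * (d p - 0) ^ q * rexp (A / 2 * s p ^ 2))) := by
    have : Continuous (fun ε => F p * (d p - ε) ^ q * rexp (A / 2 * s p ^ 2)) := by
      have : Continuous (fun ε => (d p - ε) ^ q) :=
        (continuous_const.sub continuous_id).rpow_const (fun _ => Or.inr hq0.le)
      fun_prop
    exact (this.tendsto 0).mono_left nhdsWithin_le_nhds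
  have hle : F p * (d p - 0) ^ q * rexp (A / 2 * s p ^ 2) ≤ C := by
    refine le_of_tendsto hlim ?_
    filter_upwards [Ioo_mem_nhdsGT (lt_min h1' hd₀)] with ε hε
    exact main ε hε.1 (hε.2.trans_le (min_le_right _ _)) p hp
      (hε.2.le.trans (min_le_left _ _)) h2
  have e1 : F p = rexp (u p) := indicator_of_mem hp _
  rw [e1, sub_zero] at hle
  have h3 : rexp (u p) * d p ^ q ≤ C := by
    refine le_trans ?_ hle
    apply le_mul_of_one_le_right (by positivity)
    exact Real.one_le_exp (by positivity)
  change rexp (u p) ≤ C * d p ^ (-q)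
  rw [Real.rpow_neg h1'.le, ← div_eq_mul_inv, le_div_iff₀ (by positivity)]
  exact h3

/-! ### Geometry of the parallelogram -/

theorem mem_Pgram {α w L : ℝ} {p : ℝ × ℝ} : p ∈ Pgram α w L ↔
    (0 < p.2 ∧ p.2 < w) ∧ (0 < p.1 - p.2 * (cos α / sin α) ∧ p.1 - p.2 * (cos α / sin α) < L) := by
  unfold Pgram
  simp only [mem_ofPred_eq, mul_div_assoc]
  constructor
  · rintro ⟨h1, h2, h3, h4⟩
    exact ⟨⟨h1, h2⟩, by linarith, by linarith⟩
  · rintro ⟨⟨h1, h2⟩, h3, h4⟩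
    exact ⟨h1, h2, by linarith, by linarith⟩

theorem isOpen_Pgram (α w L : ℝ) : IsOpen (Pgram α w L) := by
  have : Pgram α w L = {p | 0 < p.2} ∩ {p | p.2 < w} ∩
      {p | 0 < p.1 - p.2 * (cos α / sin α)} ∩ {p | p.1 - p.2 * (cos α / sin α) < L} := by
    ext p
    simp only [mem_Pgram, mem_inter_iff, mem_ofPred_eq]
    tauto
  rw [this]
  refine ((IsOpen.inter ?_ ?_).inter ?_).inter ?_
  · exact isOpen_lt (by fun_prop) (by fun_prop)
  · exact isOpen_lt (by fun_prop) (by fun_prop)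
  · exact isOpen_lt (by fun_prop) (by fun_prop)
  · exact isOpen_lt (by fun_prop) (by fun_prop)

theorem closure_Pgram {α w L : ℝ} {p : ℝ × ℝ} (hp : p ∈ closure (Pgram α w L)) :
    (0 ≤ p.2 ∧ p.2 ≤ w) ∧ (0 ≤ p.1 - p.2 * (cos α / sin α) ∧ p.1 - p.2 * (cos α / sin α) ≤ L) := by
  have hc : IsClosed (({p | 0 ≤ p.2} ∩ {p | p.2 ≤ w}) ∩
      ({p | 0 ≤ p.1 - p.2 * (cos α / sin α)} ∩ {p | p.1 - p.2 * (cos α / sin α) ≤ L}) :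
        Set (ℝ × ℝ)) := by
    refine (IsClosed.inter ?_ ?_).inter (IsClosed.inter ?_ ?_)
    · exact isClosed_le (by fun_prop) (by fun_prop)
    · exact isClosed_le (by fun_prop) (by fun_prop)
    · exact isClosed_le (by fun_prop) (by fun_prop)
    · exact isClosed_le (by fun_prop) (by fun_prop)
  refine closure_minimal ?_ hc hp
  intro q hq
  obtain ⟨⟨h1, h2⟩, h3, h4⟩ := mem_Pgram.1 hq
  exact ⟨⟨h1.le, h2.le⟩, h3.le, h4.le⟩

theorem isBounded_Pgram (α w L : ℝ) : Bornology.IsBounded (Pgram α w L) := by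
  set κ := cos α / sin α with hκ
  refine (Metric.isBounded_closedBall (x := (0 : ℝ × ℝ)) (r := |w| + |L| + |w| * |κ|)).subset ?_
  intro p hp
  obtain ⟨⟨h1, h2⟩, h3, h4⟩ := mem_Pgram.1 hp
  rw [← hκ] at h3 h4
  have a1 : |p.2| ≤ |w| := by rw [abs_of_pos h1, abs_of_pos (h1.trans h2)]; exact h2.le
  have a2 : |p.1 - p.2 * κ| ≤ |L| := by rw [abs_of_pos h3, abs_of_pos (h3.trans h4)]; exact h4.le
  have a3 : |p.2 * κ| ≤ |w| * |κ| := by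
    rw [abs_mul]; exact mul_le_mul_of_nonneg_right a1 (abs_nonneg _)
  have a4 : |p.1| ≤ |p.1 - p.2 * κ| + |p.2 * κ| := by
    simpa using abs_add_le (p.1 - p.2 * κ) (p.2 * κ)
  have b1 := abs_nonneg w
  have b2 := abs_nonneg L
  have b3 := mul_nonneg b1 (abs_nonneg κ)
  rw [mem_closedBall_zero_iff, Prod.norm_def, Real.norm_eq_abs, Real.norm_eq_abs]
  exact max_le (by linarith) (by linarith)

theorem convex_Pgram (α w L : ℝ) : Convex ℝ (Pgram α w L) := by
  have l1 : IsLinearMap ℝ (fun p : ℝ × ℝ => p.2) := ⟨by simp, by simp⟩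
  have l2 : IsLinearMap ℝ (fun p : ℝ × ℝ => p.1 - p.2 * (cos α / sin α)) :=
    ⟨by intros; simp; ring, by intros; simp; ring⟩
  have : Pgram α w L = ({p | 0 < p.2} ∩ {p | p.2 < w}) ∩
      ({p | 0 < p.1 - p.2 * (cos α / sin α)} ∩ {p | p.1 - p.2 * (cos α / sin α) < L}) := by
    ext p
    simp only [mem_Pgram, mem_inter_iff, mem_ofPred_eq]
  rw [this]
  exact ((convex_halfSpace_gt l1 0).inter (convex_halfSpace_lt l1 w)).inter
    ((convex_halfSpace_gt l2 0).inter (convex_halfSpace_lt l2 L))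

/-- The four corners of `P(α, w, L)`. -/
def corners (α w L : ℝ) : Finset (ℝ × ℝ) :=
  {(0, 0), (L, 0), (w * (cos α / sin α), w), (L + w * (cos α / sin α), w)}

theorem corners_not_mem {α w L : ℝ} {c : ℝ × ℝ} (hc : c ∈ corners α w L) : c ∉ Pgram α w L := by
  intro h
  obtain ⟨⟨h1, h2⟩, h3, h4⟩ := mem_Pgram.1 h
  simp only [corners, Finset.mem_insert, Finset.mem_singleton] at hc
  rcases hc with rfl | rfl | rfl | rfl <;> simp at h1 h2

/-- The data at a boundary point whose affine coordinate `x - y cot α` lies strictly between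
`0` and `L`: it is on a horizontal side. -/
theorem ScherkBVP.tendsto_horizontal {α w L : ℝ} {u : ℝ × ℝ → ℝ} (hu : ScherkBVP α w L u)
    {q : ℝ × ℝ} (hq : q ∈ closure (Pgram α w L)) (hq' : q ∉ Pgram α w L)
    (h3 : 0 < q.1 - q.2 * (cos α / sin α)) (h4 : q.1 - q.2 * (cos α / sin α) < L) :
    Tendsto u (nhdsWithin q (Pgram α w L)) atBot := by
  obtain ⟨⟨h1, h2⟩, -⟩ := closure_Pgram hq
  obtain ⟨x, y⟩ := q
  simp only at *
  rcases h1.eq_or_lt with rfl | h1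
  · exact hu.2.1 x (by simpa using h3) (by simpa using h4)
  rcases h2.eq_or_lt with rfl | h2
  · exact hu.2.2.1 x (by rw [mul_div_assoc]; linarith) (by rw [mul_div_assoc]; linarith)
  · exact absurd (mem_Pgram.2 ⟨⟨h1, h2⟩, h3, h4⟩) hq'

theorem boundary_cases {α w L : ℝ} {q : ℝ × ℝ} (hq : q ∈ closure (Pgram α w L))
    (hq' : q ∉ Pgram α w L) : q ∈ corners α w L ∨
    (∀ u, ScherkBVP α w L u → Tendsto u (nhdsWithin q (Pgram α w L)) atBot) ∨
    (∀ u, ScherkBVP α w L u → Tendsto u (nhdsWithin q (Pgram α w L)) atTop) := by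
  obtain ⟨⟨h1, h2⟩, h3, h4⟩ := closure_Pgram hq
  by_cases h : 0 < q.1 - q.2 * (cos α / sin α) ∧ q.1 - q.2 * (cos α / sin α) < L
  · exact Or.inr (Or.inl fun u hu => hu.tendsto_horizontal hq hq' h.1 h.2)
  have h5 : q.1 - q.2 * (cos α / sin α) = 0 ∨ q.1 - q.2 * (cos α / sin α) = L := by
    by_contra! hne
    exact h ⟨lt_of_le_of_ne h3 hne.1.symm, lt_of_le_of_ne h4 hne.2⟩
  obtain ⟨x, y⟩ := q
  simp only at *
  simp only [corners, Finset.mem_insert, Finset.mem_singleton, Prod.mk.injEq]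
  rcases h1.eq_or_lt with rfl | h1
  · left
    simp only [zero_mul, sub_zero] at h5
    rcases h5 with rfl | rfl <;> simp
  rcases h2.eq_or_lt with rfl | h2
  · left
    rcases h5 with h5 | h5
    · right; right; left; exact ⟨by linarith, rfl⟩
    · right; right; right; exact ⟨by linarith, rfl⟩
  right; right
  intro u hu
  rcases h5 with h5 | h5
  · have := hu.2.2.2.1 y h1 h2
    rwa [mul_div_assoc, ← show x = y * (cos α / sin α) by linarith] at this
  · have := hu.2.2.2.2 y h1 h2
    rwa [mul_div_assoc, ← show x = L + y * (cos α / sin α) by linarith] at this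

/-! ### Integrability of `e ^ u` -/

theorem integrableOn_mul_rpow {s L q : ℝ} (hs : 0 < s) (hL : 0 < L) (hq : q < 1) :
    IntegrableOn (fun t : ℝ => (s * t) ^ (-q)) (Ioo 0 L) := by
  have h : IntervalIntegrable (fun t : ℝ => t ^ (-q)) volume 0 L :=
    intervalIntegral.intervalIntegrable_rpow' (by linarith)
  rw [intervalIntegrable_iff_integrableOn_Ioo_of_le hL.le] at h
  refine IntegrableOn.congr_fun (h.const_mul (s ^ (-q))) ?_ measurableSet_Ioo
  intro t ht
  exact (Real.mul_rpow hs.le ht.1.le).symm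

theorem integrableOn_mul_sub_rpow {s L q : ℝ} (hs : 0 < s) (hL : 0 < L) (hq : q < 1) :
    IntegrableOn (fun t : ℝ => (s * (L - t)) ^ (-q)) (Ioo 0 L) := by
  have h : IntervalIntegrable (fun t : ℝ => t ^ (-q)) volume 0 L :=
    intervalIntegral.intervalIntegrable_rpow' (by linarith)
  have h' := (h.comp_sub_left L).symm
  simp only [sub_self, sub_zero] at h'
  rw [intervalIntegrable_iff_integrableOn_Ioo_of_le hL.le] at h'
  refine IntegrableOn.congr_fun (h'.const_mul (s ^ (-q))) ?_ measurableSet_Ioo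
  intro t ht
  exact (Real.mul_rpow hs.le (by linarith [ht.2])).symm

/-- A function of the affine coordinate `x - y cot α` alone is integrable on the parallelogram
as soon as it is integrable on `(0, L)`: the shear `(x, y) ↦ (x - y cot α, y)` preserves area. -/
theorem integrableOn_shear {α w L : ℝ} {h : ℝ → ℝ} (hh : IntegrableOn h (Ioo 0 L)) :
    IntegrableOn (fun p : ℝ × ℝ => h (p.1 - p.2 * (cos α / sin α))) (Pgram α w L) := by
  set κ := cos α / sin α with hκ
  have h1 : Integrable ((Ioo 0 L).indicator h) :=
    (integrable_indicator_iff measurableSet_Ioo).2 hh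
  have h2 : Integrable ((Ioo 0 w).indicator (fun _ => (1 : ℝ))) :=
    (integrable_indicator_iff measurableSet_Ioo).2 (by simp)
  have h3 := h2.mul_prod h1
  have mp : MeasurePreserving (fun p : ℝ × ℝ => (p.1, p.2 - p.1 * κ))
      ((volume : Measure ℝ).prod volume) ((volume : Measure ℝ).prod volume) := by
    refine (MeasurePreserving.id volume).skew_product (g := fun a b => b - a * κ)
      (by unfold Function.uncurry; fun_prop) (Eventually.of_forall fun a => ?_)
    exact (measurePreserving_sub_right volume (a * κ)).map_eq
  have h4 := (mp.integrable_comp_of_integrable h3).swap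
  rw [← integrable_indicator_iff (isOpen_Pgram α w L).measurableSet]
  refine h4.congr (Eventually.of_forall ?_)
  intro p
  simp only [Function.comp, Prod.swap]
  by_cases hp : p ∈ Pgram α w L
  · obtain ⟨⟨a1, a2⟩, a3, a4⟩ := mem_Pgram.1 hp
    rw [indicator_of_mem hp, indicator_of_mem (show p.2 ∈ Ioo 0 w from ⟨a1, a2⟩),
      indicator_of_mem (show p.1 - p.2 * κ ∈ Ioo 0 L from ⟨a3, a4⟩), one_mul]
  · rw [indicator_of_notMem hp]
    by_contra hne
    obtain ⟨n1, n2⟩ := mul_ne_zero_iff.1 hne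
    have m1 : p.2 ∈ Ioo 0 w := mem_of_indicator_ne_zero n1
    have m2 : p.1 - p.2 * κ ∈ Ioo 0 L := mem_of_indicator_ne_zero n2
    exact hp (mem_Pgram.2 ⟨m1, m2⟩)

/-- `e ^ u` is integrable: it is at most `C d ^ (-q)` with `q < 1`, `d` being the distance to
either of the two slanted sides. -/
theorem integrableOn_exp {α w L : ℝ} (hα : α ∈ Ioo 0 π) (hL : 0 < L) {u : ℝ × ℝ → ℝ}
    (hu : ScherkBVP α w L u) : IntegrableOn (fun p => rexp (u p)) (Pgram α w L) := by
  have hs : 0 < sin α := sin_pos_of_mem_Ioo hα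
  set κ := cos α / sin α with hκ
  have hcs : cos α = sin α * κ := by rw [hκ]; field_simp
  have hP := isOpen_Pgram α w L
  have e1 : ∀ p : ℝ × ℝ, sin α * p.1 + -cos α * p.2 - 0 = sin α * (p.1 - p.2 * κ) := by
    intro p; rw [hcs]; ring
  have e2 : ∀ p : ℝ × ℝ, -sin α * p.1 + cos α * p.2 - -(L * sin α)
      = sin α * (L - (p.1 - p.2 * κ)) := by
    intro p; rw [hcs]; ring
  have hd : 0 < sin α * (L / 2) := by positivity
  obtain ⟨C₁, q₁, -, hq₁, b₁⟩ := exp_le_dist_rpow hP (isBounded_Pgram α w L) hu.1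
    (a := sin α) (b := -cos α) (c := 0) (by rw [neg_sq, sin_sq_add_cos_sq]) hd (by
      intro x hx hx' p1 p2
      rw [e1] at p1 p2
      have p1 := pos_of_mul_pos_right p1 hs.le
      have p2 := le_of_mul_le_mul_left p2 hs
      exact hu.tendsto_horizontal hx hx' p1 (by linarith))
  obtain ⟨C₂, q₂, -, hq₂, b₂⟩ := exp_le_dist_rpow hP (isBounded_Pgram α w L) hu.1
    (a := -sin α) (b := cos α) (c := -(L * sin α)) (by rw [neg_sq, sin_sq_add_cos_sq]) hd (by
      intro x hx hx' p1 p2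
      rw [e2] at p1 p2
      have p1 := pos_of_mul_pos_right p1 hs.le
      have p2 := le_of_mul_le_mul_left p2 hs
      exact hu.tendsto_horizontal hx hx' (by linarith) (by linarith))
  have hi := integrableOn_shear (α := α) (w := w)
    (((integrableOn_mul_rpow hs hL hq₁).const_mul |C₁|).add
    ((integrableOn_mul_sub_rpow hs hL hq₂).const_mul |C₂|))
  refine Integrable.mono' hi ?_ ?_
  · exact (hu.1.1.continuousOn.rexp).aestronglyMeasurable hP.measurableSet
  refine (ae_restrict_iff' hP.measurableSet).2 (Eventually.of_forall fun p hp => ?_)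
  obtain ⟨-, a3, a4⟩ := mem_Pgram.1 hp
  rw [← hκ] at a3 a4
  rw [Real.norm_eq_abs, abs_of_pos (exp_pos _)]
  simp only [Pi.add_apply]
  have g1 : 0 ≤ (sin α * (p.1 - p.2 * κ)) ^ (-q₁) := rpow_nonneg (by positivity) _
  have g2 : 0 ≤ (sin α * (L - (p.1 - p.2 * κ))) ^ (-q₂) :=
    rpow_nonneg (mul_nonneg hs.le (by linarith)) _
  rcases le_total (p.1 - p.2 * κ) (L / 2) with h | h
  · have := b₁ p hp (by rw [e1]; positivity)
      (by rw [e1]; exact mul_le_mul_of_nonneg_left h hs.le)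
    rw [e1] at this
    have t1 := mul_le_mul_of_nonneg_right (le_abs_self C₁) g1
    have t2 := mul_nonneg (abs_nonneg C₂) g2
    linarith
  · have := b₂ p hp (by rw [e2]; exact mul_pos hs (by linarith))
      (by rw [e2]; exact mul_le_mul_of_nonneg_left (by linarith) hs.le)
    rw [e2] at this
    have t1 := mul_le_mul_of_nonneg_right (le_abs_self C₂) g2
    have t2 := mul_nonneg (abs_nonneg C₁) g1
    linarith

/-! ### Integrating the flux -/

/-- The failure of the truncated exponential `E` to satisfy `E' = E + 1`, compared along `u` and
`v`; it is the error term in the flux inequality. -/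
def defect (n : ℕ) (u v : ℝ × ℝ → ℝ) (p : ℝ × ℝ) : ℝ :=
  |(truncExp n (u p) - rexp (u p) * trunc n (u p)) - (truncExp n (v p) - rexp (v p) * trunc n (v p))|

theorem abs_truncExp_sub_le (n : ℕ) (t : ℝ) :
    |truncExp n t - rexp t * trunc n t| ≤ 2 * rexp t + 1 := by
  have h1 := abs_truncExp_le n t
  have h2 : |rexp t * trunc n t| ≤ rexp t := by
    rw [abs_of_nonneg (mul_nonneg (exp_pos t).le (trunc_nonneg n t))]
    exact mul_le_of_le_one_right (exp_pos t).le (trunc_le_one n t)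
  have h3 := abs_sub (truncExp n t) (rexp t * trunc n t)
  linarith

theorem defect_nonneg (n : ℕ) (u v : ℝ × ℝ → ℝ) (p : ℝ × ℝ) : 0 ≤ defect n u v p := abs_nonneg _

theorem defect_le (n : ℕ) (u v : ℝ × ℝ → ℝ) (p : ℝ × ℝ) :
    defect n u v p ≤ 2 * rexp (u p) + 2 * rexp (v p) + 2 := by
  have h1 := abs_truncExp_sub_le n (u p)
  have h2 := abs_truncExp_sub_le n (v p)
  have h3 := abs_sub (truncExp n (u p) - rexp (u p) * trunc n (u p))
    (truncExp n (v p) - rexp (v p) * trunc n (v p))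
  unfold defect
  linarith

theorem defect_eq_zero {n : ℕ} {u v : ℝ × ℝ → ℝ} {p : ℝ × ℝ} (hu : |u p| ≤ n) (hv : |v p| ≤ n) :
    defect n u v p = 0 := by
  unfold defect
  rw [truncExp_eq hu, truncExp_eq hv, trunc_eq_one hu, trunc_eq_one hv]
  simp

theorem defect_continuousOn (n : ℕ) {u v : ℝ × ℝ → ℝ} {P : Set (ℝ × ℝ)} (hu : ContinuousOn u P)
    (hv : ContinuousOn v P) : ContinuousOn (defect n u v) P := by
  have hc : Continuous fun t => truncExp n t - rexp t * trunc n t :=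
    (truncExp_contDiff n).continuous.sub (expTrunc_continuous n)
  exact ((hc.comp_continuousOn hu).sub (hc.comp_continuousOn hv)).abs

section Scherk

variable {α w L : ℝ} {u v : ℝ × ℝ → ℝ}

theorem integrableOn_defect (n : ℕ) (hα : α ∈ Ioo 0 π) (hL : 0 < L) (hu : ScherkBVP α w L u)
    (hv : ScherkBVP α w L v) :
    IntegrableOn (fun p => 2 * rexp (u p) + 2 * rexp (v p) + 2) (Pgram α w L) ∧
    IntegrableOn (defect n u v) (Pgram α w L) := by
  have hP := isOpen_Pgram α w L
  have hi : IntegrableOn (fun p => 2 * rexp (u p) + 2 * rexp (v p) + 2) (Pgram α w L) :=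
    (((integrableOn_exp hα hL hu).const_mul 2).add ((integrableOn_exp hα hL hv).const_mul 2)).add
      (integrableOn_const (isBounded_Pgram α w L).measure_lt_top.ne)
  refine ⟨hi, Integrable.mono' hi ?_ (Eventually.of_forall fun p => ?_)⟩
  · exact (defect_continuousOn n hu.1.1.continuousOn hv.1.1.continuousOn).aestronglyMeasurable
      hP.measurableSet
  · rw [Real.norm_eq_abs, abs_of_nonneg (defect_nonneg n u v p)]
    exact defect_le n u v p

theorem tendsto_integral_defect (hα : α ∈ Ioo 0 π) (hL : 0 < L) (hu : ScherkBVP α w L u)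
    (hv : ScherkBVP α w L v) :
    Tendsto (fun n => ∫ p in Pgram α w L, defect n u v p) atTop (nhds 0) := by
  have h := tendsto_integral_of_dominated_convergence (μ := volume.restrict (Pgram α w L))
    (F := fun n => defect n u v) (f := fun _ => 0) _
    (fun n => (integrableOn_defect n hα hL hu hv).2.aestronglyMeasurable)
    (integrableOn_defect 0 hα hL hu hv).1
    (fun n => Eventually.of_forall fun p => by
      rw [Real.norm_eq_abs, abs_of_nonneg (defect_nonneg n u v p)]
      exact defect_le n u v p)
    (Eventually.of_forall fun p => by
      refine tendsto_const_nhds.congr' ?_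
      filter_upwards [eventually_ge_atTop ⌈|u p|⌉₊, eventually_ge_atTop ⌈|v p|⌉₊] with n h1 h2
      exact (defect_eq_zero (Nat.ceil_le.1 h1) (Nat.ceil_le.1 h2)).symm)
  simpa using h

/-- `E (u) - E (v)` vanishes near the open sides, because `E` is constant near `±∞`, and the
cutoff `ζ` vanishes near the corners; so the divergence theorem has no boundary term. -/
theorem setIntegral_flux_eq_zero (n : ℕ) (hu : ScherkBVP α w L u) (hv : ScherkBVP α w L v)
    {ζ g : ℝ × ℝ → ℝ} (hζ : ContDiff ℝ 1 ζ)
    (hζ0 : ∀ c ∈ corners α w L, ∀ᶠ p in nhds c, ζ p = 0)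
    (hg : ContDiffOn ℝ 1 g (Pgram α w L)) (e : ℝ × ℝ) :
    IntegrableOn (fun p => fderiv ℝ (fun q => ζ q * ((truncExp n (u q) - truncExp n (v q)) * g q))
      p e) (Pgram α w L) ∧
    ∫ p in Pgram α w L, fderiv ℝ
      (fun q => ζ q * ((truncExp n (u q) - truncExp n (v q)) * g q)) p e = 0 := by
  have hu1 : ContDiffOn ℝ 1 u (Pgram α w L) := hu.1.1.of_le (by norm_cast)
  have hv1 : ContDiffOn ℝ 1 v (Pgram α w L) := hv.1.1.of_le (by norm_cast)
  refine setIntegral_fderiv_eq_zero (isOpen_Pgram α w L) (isBounded_Pgram α w L) ?_ ?_ e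
  · exact hζ.contDiffOn.mul ((((truncExp_contDiff n).comp_contDiffOn hu1).sub
      ((truncExp_contDiff n).comp_contDiffOn hv1)).mul hg)
  · intro q hq hq'
    rcases boundary_cases hq hq' with h | h | h
    · filter_upwards [nhdsWithin_le_nhds (hζ0 q h)] with p hp
      rw [hp, zero_mul]
    · filter_upwards [(h u hu).eventually_le_atBot (-(n + 1)),
        (h v hv).eventually_le_atBot (-(n + 1))] with p h1 h2
      rw [truncExp_eq_of_le h1, truncExp_eq_of_le h2]
      simp
    · filter_upwards [(h u hu).eventually_ge_atTop ((n : ℝ) + 1),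
        (h v hv).eventually_ge_atTop ((n : ℝ) + 1)] with p h1 h2
      rw [truncExp_eq_of_ge h1, truncExp_eq_of_ge h2]
      simp

/-- The integrated flux inequality: a region where the normals differ by a definite amount is
paid for by the truncation defect. -/
theorem le_integral_defect (hα : α ∈ Ioo 0 π) (hL : 0 < L) (hu : ScherkBVP α w L u)
    (hv : ScherkBVP α w L v) {p₀ : ℝ × ℝ} {ρ δ : ℝ} (hρ : 0 < ρ)
    (hball : Metric.closedBall p₀ (2 * ρ) ⊆ Pgram α w L) {n : ℕ}
    (hn : ∀ p ∈ Metric.closedBall p₀ ρ, |u p| ≤ n)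
    (hδ : ∀ p ∈ Metric.closedBall p₀ ρ, δ ≤ rexp (u p) * normalGap u v p) :
    δ * volume.real (Metric.closedBall p₀ ρ) ≤ ∫ p in Pgram α w L, defect n u v p := by
  have hP := isOpen_Pgram α w L
  have hKP : Metric.closedBall p₀ ρ ⊆ Pgram α w L :=
    (Metric.closedBall_subset_closedBall (by linarith)).trans hball
  set K := Metric.closedBall p₀ ρ with hK
  have hKm : MeasurableSet K := measurableSet_closedBall
  set M : ℝ := rexp (n + 1) + 1 with hM
  have hM0 : 0 < M := by positivity
  suffices H : ∀ ε ∈ Ioc 0 ρ, δ * volume.real K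
      ≤ (∫ p in Pgram α w L, defect n u v p) + 8 * M * ε by
    have ht : Tendsto (fun ε : ℝ => (∫ p in Pgram α w L, defect n u v p) + 8 * M * ε)
        (nhdsWithin 0 (Ioi 0)) (nhds ((∫ p in Pgram α w L, defect n u v p) + 8 * M * 0)) :=
      (Continuous.tendsto (by fun_prop) 0).mono_left nhdsWithin_le_nhds
    rw [mul_zero, add_zero] at ht
    refine ge_of_tendsto ht ?_
    filter_upwards [Ioc_mem_nhdsGT hρ] with ε hε using H ε hε
  intro ε hε
  obtain ⟨ζ, z1, z2, z3, z4, z5, z6, z7⟩ := exists_cutoff (corners α w L) hε.1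
  have one_le : ((1 : ℕ∞) : WithTop ℕ∞) ≤ ((⊤ : ℕ∞) : WithTop ℕ∞) := by norm_cast
  have regx : ContDiffOn ℝ 1 (fun q => pdx u q / areaW u q - pdx v q / areaW v q)
      (Pgram α w L) :=
    (((pdx_contDiffOn hP hu.1.1).div (areaW_contDiffOn hP hu.1.1)
      fun p _ => areaW_ne_zero u p).sub ((pdx_contDiffOn hP hv.1.1).div
        (areaW_contDiffOn hP hv.1.1) fun p _ => areaW_ne_zero v p)).of_le one_le
  have regy : ContDiffOn ℝ 1 (fun q => pdy u q / areaW u q - pdy v q / areaW v q)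
      (Pgram α w L) :=
    (((pdy_contDiffOn hP hu.1.1).div (areaW_contDiffOn hP hu.1.1)
      fun p _ => areaW_ne_zero u p).sub ((pdy_contDiffOn hP hv.1.1).div
        (areaW_contDiffOn hP hv.1.1) fun p _ => areaW_ne_zero v p)).of_le one_le
  obtain ⟨ix, jx⟩ := setIntegral_flux_eq_zero n hu hv z1 z4 regx (1, 0)
  obtain ⟨iy, jy⟩ := setIntegral_flux_eq_zero n hu hv z1 z4 regy (0, 1)
  have iB := (integrableOn_defect n hα hL hu hv).2
  have iK : IntegrableOn (K.indicator fun _ => δ) (Pgram α w L) :=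
    ((integrable_indicator_iff hKm).2 (integrableOn_const
      (Metric.isBounded_closedBall.measure_lt_top.ne))).integrableOn
  have iZ : IntegrableOn (fun p => 8 * M * ‖fderiv ℝ ζ p‖) (Pgram α w L) :=
    (z6.const_mul (8 * M)).integrableOn
  obtain ⟨D, iD, jD, hD⟩ : ∃ D : ℝ × ℝ → ℝ, IntegrableOn D (Pgram α w L) ∧
      ∫ p in Pgram α w L, D p = 0 ∧ ∀ p ∈ Pgram α w L,
        K.indicator (fun _ => δ) p - defect n u v p - 8 * M * ‖fderiv ℝ ζ p‖ ≤ D p := by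
    refine ⟨_, ix.add iy, by rw [integral_add' ix iy, jx, jy, add_zero], fun p hp => ?_⟩
    refine le_trans ?_ (div_flux_ge hP hu.1 hv.1 (truncExp_hasDerivAt n)
      (fun t => mul_nonneg (exp_pos t).le (trunc_nonneg n t)) (abs_truncExp_le_const n)
      z1 z2 z3 hp)
    have hle : K.indicator (fun _ => δ) p
        ≤ ζ p * (rexp (u p) * trunc n (u p) * normalGap u v p) := by
      by_cases hpK : p ∈ K
      · rw [indicator_of_mem hpK, trunc_eq_one (hn p hpK), mul_one, z5 p, one_mul]
        · exact hδ p hpK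
        · intro c hc
          -- a corner is outside the ball of radius `2ρ`, hence at distance at least `ρ` from `p`
          by_contra! hlt
          refine corners_not_mem hc (hball ?_)
          rw [Metric.mem_closedBall]
          rw [hK, Metric.mem_closedBall] at hpK
          have := dist_triangle c p p₀
          rw [dist_comm c p] at this
          linarith [hε.2]
      · rw [indicator_of_notMem hpK]
        exact mul_nonneg (z2 p) (mul_nonneg (mul_nonneg (exp_pos _).le (trunc_nonneg n _))
          (normalGap_nonneg u v p))
    have : defect n u v p = |(truncExp n (u p) - rexp (u p) * trunc n (u p))
      - (truncExp n (v p) - rexp (v p) * trunc n (v p))| := rfl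
    linarith
  have hInt := setIntegral_mono_on ((iK.sub iB).sub iZ) iD hP.measurableSet hD
  rw [jD, integral_sub' (iK.sub iB) iZ, integral_sub' iK iB,
    integral_const_mul, setIntegral_indicator hKm, inter_eq_self_of_subset_right hKP,
    setIntegral_const, smul_eq_mul] at hInt
  have hz : ∫ p in Pgram α w L, ‖fderiv ℝ ζ p‖ ≤ ε :=
    (setIntegral_le_integral z6 (Eventually.of_forall fun p => norm_nonneg _)).trans z7
  have hz' := mul_le_mul_of_nonneg_left hz (by positivity : 0 ≤ 8 * M)
  linarith [mul_comm δ (volume.real K)]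

theorem normalGap_eq_zero (hα : α ∈ Ioo 0 π) (hL : 0 < L) (hu : ScherkBVP α w L u)
    (hv : ScherkBVP α w L v) {p₀ : ℝ × ℝ} (hp₀ : p₀ ∈ Pgram α w L) : normalGap u v p₀ = 0 := by
  by_contra hne
  have hP := isOpen_Pgram α w L
  have hpos : 0 < normalGap u v p₀ := lt_of_le_of_ne (normalGap_nonneg u v p₀) (Ne.symm hne)
  have hcu : ContinuousAt u p₀ := hu.1.1.continuousOn.continuousAt (hP.mem_nhds hp₀)
  have hcg : ContinuousAt (normalGap u v) p₀ :=
    (normalGap_continuousOn hP hu.1.1 hv.1.1).continuousAt (hP.mem_nhds hp₀)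
  set δ := rexp (u p₀) * normalGap u v p₀ / 2 with hδ
  have hδ0 : 0 < δ := by positivity
  have e1 : ∀ᶠ p in nhds p₀, δ ≤ rexp (u p) * normalGap u v p := by
    have h : δ < rexp (u p₀) * normalGap u v p₀ := by rw [hδ] at hδ0 ⊢; linarith
    filter_upwards [(hcu.rexp.mul hcg).eventually (lt_mem_nhds h)] with p hp using hp.le
  have e2 : ∀ᶠ p in nhds p₀, |u p| ≤ |u p₀| + 1 := by
    filter_upwards [hcu.abs.eventually (gt_mem_nhds (lt_add_one |u p₀|))] with p hp using hp.le
  obtain ⟨r, hr, hball⟩ := Metric.nhds_basis_closedBall.eventually_iff.1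
    ((e1.and e2).and (hP.mem_nhds hp₀))
  have hρ : 0 < r / 2 := half_pos hr
  have hsub : ∀ p ∈ Metric.closedBall p₀ (r / 2), p ∈ Metric.closedBall p₀ r := fun p hp =>
    Metric.closedBall_subset_closedBall (by linarith) hp
  have hvol : 0 < volume.real (Metric.closedBall p₀ (r / 2)) :=
    ENNReal.toReal_pos (Metric.measure_closedBall_pos volume p₀ hρ).ne'
      Metric.isBounded_closedBall.measure_lt_top.ne
  have key : ∀ᶠ n : ℕ in atTop, δ * volume.real (Metric.closedBall p₀ (r / 2))
      ≤ ∫ p in Pgram α w L, defect n u v p := by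
    filter_upwards [eventually_ge_atTop ⌈|u p₀| + 1⌉₊] with n hn
    refine le_integral_defect hα hL hu hv hρ ?_ ?_ ?_
    · rw [mul_div_cancel₀ r two_ne_zero]
      exact fun p hp => (hball hp).2
    · exact fun p hp => (hball (hsub p hp)).1.2.trans (Nat.ceil_le.1 hn)
    · exact fun p hp => (hball (hsub p hp)).1.1
  have := ge_of_tendsto (tendsto_integral_defect hα hL hu hv) key
  linarith [mul_pos hδ0 hvol]

end Scherk

/-- two Scherk translators on the same parallelogram differ by a constant. -/
theorem scherk_translator_unique (α w L : ℝ) (hα : α ∈ Set.Ioo 0 π)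
    (hw : 0 < w) (hL : 0 < L) (u v : ℝ × ℝ → ℝ)
    (hu : ScherkBVP α w L u) (hv : ScherkBVP α w L v) :
    ∃ c : ℝ, ∀ p ∈ Pgram α w L, u p - v p = c := by
  have hP := isOpen_Pgram α w L
  obtain ⟨c, hc⟩ := hP.exists_eq_add_of_fderiv_eq (𝕜 := ℝ) (f := u) (g := v)
    (convex_Pgram α w L).isPreconnected
    (fun p hp => (diffAt_of_contDiffOn hP hu.1.1 hp).differentiableWithinAt)
    (fun p hp => (diffAt_of_contDiffOn hP hv.1.1 hp).differentiableWithinAt) (by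
      intro p hp
      obtain ⟨h1, h2⟩ := grad_eq_of_normalGap (normalGap_eq_zero hα hL hu hv hp)
      refine ContinuousLinearMap.ext fun e => ?_
      rw [fderiv_pair, fderiv_pair, h1, h2])
  exact ⟨c, fun p hp => by rw [hc hp]; simp⟩
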